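/- arXiv:2311.10006 — 3 statements merged into one kernel-verified Lean document; each statement's English description precedes it below -/
import Mathlib

section
/- Let d ≥ 1, α > 0, and let φ be a Schwartz function on ℝ^d. Define v(t,x) := (V_t φ)(x) = -α ln((P_t e^{-φ/α})(x)). Then v(0,·) = φ, v is smooth on (0,∞) × ℝ^d, and v solves the Hamilton–Jacobi equation ∂_t v(t,x) = (α/2) Δv(t,x) - (1/2) |∇v(t,x)|² for all t > 0 and x ∈ ℝ^d. -/
open MeasureTheory Real Filter Set

noncomputable section

/-- Euclidean space `ℝ^d`. -/
abbrev Euc (d : ℕ) := EuclideanSpace ℝ (Fin d)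

/-- The heat semigroup `P_t` with generator `(α/2)Δ`: for `t > 0` it is given by
convolution with the Gaussian kernel of variance `αt`, and `P_0 f = f`. -/
def heatP (d : ℕ) (α t : ℝ) (f : Euc d → ℝ) (x : Euc d) : ℝ :=
  if t = 0 then f x
  else ∫ y : Euc d, (2 * π * α * t) ^ (-(d : ℝ) / 2) *
    Real.exp (-‖x - y‖ ^ 2 / (2 * α * t)) * f y

/-- The Laplacian of `f : ℝ^d → ℝ`, as the sum of the second partial derivatives in the
coordinate directions. -/
def lap (d : ℕ) (f : Euc d → ℝ) (x : Euc d) : ℝ :=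
  ∑ i : Fin d, fderiv ℝ (fun y => fderiv ℝ f y (EuclideanSpace.single i 1)) x
    (EuclideanSpace.single i 1)

/-- The Cole–Hopf transform `V_t φ = -α ln (P_t e^{-φ/α})`. -/
def coleHopf (d : ℕ) (α t : ℝ) (φ : Euc d → ℝ) (x : Euc d) : ℝ :=
  -α * Real.log (heatP d α t (fun y => Real.exp (-φ y / α)) x)

/-- A tempered measure: a locally finite Borel measure integrating every Schwartz function. -/
def IsTempered {d : ℕ} (μ : Measure (Euc d)) : Prop :=
  IsLocallyFiniteMeasure μ ∧ ∀ φ : SchwartzMap (Euc d) ℝ, Integrable (fun x => φ x) μ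

/-- The Gaussian measure on `ℝ^d` with mean `m` and covariance `t • Id`, defined through its
density with respect to Lebesgue measure. -/
def gaussE (d : ℕ) (m : Euc d) (t : ℝ) : Measure (Euc d) :=
  volume.withDensity fun x =>
    ENNReal.ofReal ((2 * π * t) ^ (-(d : ℝ) / 2) * Real.exp (-‖x - m‖ ^ 2 / (2 * t)))

/-- The unit cube `[0,1]^d`. -/
def unitCube (d : ℕ) : Set (Euc d) := {x | ∀ i, x i ∈ Set.Icc (0 : ℝ) 1}

/-- First-order partial derivative in direction `i`. -/
def pderivI {d : ℕ} (i : Fin d) (f : Euc d → ℝ) (x : Euc d) : ℝ :=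
  fderiv ℝ f x (EuclideanSpace.single i 1)

/-- Iterated partial derivative in direction `i`. -/
def pderivIter {d : ℕ} (i : Fin d) : ℕ → (Euc d → ℝ) → Euc d → ℝ
  | 0, f => f
  | n + 1, f => pderivI i (pderivIter i n f)

/-- The partial derivative `D^β` for a multi-index `β`. -/
def Dmulti {d : ℕ} (β : Fin d → ℕ) (f : Euc d → ℝ) : Euc d → ℝ :=
  (List.finRange d).foldr (fun i g => pderivIter i (β i) g) f

/-! As a function of `y`, the heat kernel between `x` and `y` at time `t` is `exp` of
`c + ⟪y, ξ⟫ + a ‖y‖²`, which is linear in the parameters `(c, ξ, a)`, and these depend smoothly on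
`(t, x)`. So `P_t f` is a Laplace integral `p ↦ ∫ exp (ℓ_y p) f(y) dy` composed with a smooth map.
A Laplace integral is smooth wherever it converges absolutely on an open set: its derivative is the
Laplace integral with weight `ℓ_y ⊗ f(y)`, and convexity of `exp` dominates that integrand near `p`
by the values of the original one at the vertices of a polytope around `p`. Differentiating under
the integral, `P_t f` inherits the heat equation from the heat kernel, and by the chain rule
`-α log` of a positive solution of the heat equation solves the Hamilton–Jacobi equation. -/

universe u

section LaplaceIntegral

open scoped Topology

variable {Ω : Type*} [MeasurableSpace Ω] {μ : Measure Ω} {E F : Type*}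
  [NormedAddCommGroup E] [NormedSpace ℝ E] [NormedAddCommGroup F] [NormedSpace ℝ F]
  {X : Type*} [NormedAddCommGroup X] [NormedSpace ℝ X]
  {ℓ : Ω → E →L[ℝ] ℝ} {w : Ω → F} {U : Set E} {p : E}

/-- The Laplace integral `p ↦ ∫ exp (ℓ_ω p) w(ω) dμ(ω)` of a vector-valued weight `w` against the
exponentials of a family `ℓ` of continuous linear functionals. -/
def laplaceIntegral (ℓ : Ω → E →L[ℝ] ℝ) (w : Ω → F) (μ : Measure Ω) (p : E) : F :=
  ∫ ω, rexp (ℓ ω p) • w ω ∂μ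

/-- Absolute convergence of the Laplace integral of `w` at every point of `U`. -/
def LaplaceIntegrableOn (ℓ : Ω → E →L[ℝ] ℝ) (w : Ω → F) (μ : Measure Ω) (U : Set E) : Prop :=
  ∀ p ∈ U, Integrable (fun ω => rexp (ℓ ω p) • w ω) μ

lemma exists_ball_subset_convexHull_finset [FiniteDimensional ℝ E] (hU : U ∈ 𝓝 p) :
    ∃ s : Finset E, ∃ δ > 0, (s : Set E) ⊆ U ∧ Metric.ball p δ ⊆ convexHull ℝ (s : Set E) := by
  obtain ⟨s, hps, hsU⟩ := (convex_singleton p).exists_subset_interior_convexHull_finset_of_isCompact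
    isCompact_singleton (by rwa [nhdsSet_singleton])
  obtain ⟨δ, hδ, hball⟩ := Metric.isOpen_iff.1 isOpen_interior p (hps rfl)
  exact ⟨s, δ, hδ, (subset_convexHull ℝ _).trans hsU, hball.trans interior_subset⟩

lemma exp_le_sum_exp_of_mem_convexHull {s : Finset E} {q : E}
    (hq : q ∈ convexHull ℝ (s : Set E)) (f : E →L[ℝ] ℝ) :
    rexp (f q) ≤ ∑ b ∈ s, rexp (f b) := by
  obtain ⟨b, hb, hqb⟩ :=
    (f.toLinearMap.convexOn convex_univ).exists_ge_of_mem_convexHull (subset_univ _) hq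
  exact (exp_le_exp.2 hqb).trans
    (Finset.single_le_sum (f := fun b => rexp (f b)) (fun _ _ => (exp_pos _).le) hb)

/-- Moving from `q` by `ε` in the direction in which `f` grows fastest gains a factor
`exp (ε * ‖f‖) ≥ ε * ‖f‖` and does not leave the convex hull. -/
lemma norm_mul_exp_le_sum_exp {s : Finset E} {q : E} {ε : ℝ} (hε : 0 < ε)
    (hball : Metric.closedBall q ε ⊆ convexHull ℝ (s : Set E)) (f : E →L[ℝ] ℝ) :
    ‖f‖ * rexp (f q) ≤ ε⁻¹ * ∑ b ∈ s, rexp (f b) := by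
  set S := ∑ b ∈ s, rexp (f b)
  have hexp : ∀ z ∈ Metric.closedBall q ε, rexp (f z) ≤ S := fun z hz =>
    exp_le_sum_exp_of_mem_convexHull (hball hz) f
  have hq := hexp q (Metric.mem_closedBall_self hε.le)
  have hS : 0 < S := (exp_pos _).trans_le hq
  have hlog : ∀ z ∈ Metric.closedBall q ε, f z ≤ log S := fun z hz =>
    (le_log_iff_exp_le hS).2 (hexp z hz)
  have hstep : ∀ u : E, ‖u‖ = 1 → f q + ε * f u ≤ log S := fun u hu => by
    simpa using hlog (q + ε • u) (by simp [norm_smul, hu, abs_of_pos hε])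
  have hnorm : ‖f‖ ≤ (log S - f q) / ε := by
    refine f.opNorm_le_of_unit_norm ?_ fun u hu => ?_
    · exact div_nonneg (sub_nonneg.2 ((le_log_iff_exp_le hS).2 hq)) hε.le
    · rw [le_div_iff₀' hε, norm_eq_abs]
      nth_rw 1 [← abs_of_pos hε]
      rw [← abs_mul, abs_le]
      have h₁ := hstep u hu
      have h₂ := hstep (-u) (by rwa [norm_neg])
      rw [map_neg] at h₂
      constructor <;> linarith
  rw [le_inv_mul_iff₀ hε]
  calc ε * (‖f‖ * rexp (f q)) = ε * ‖f‖ * rexp (f q) := by ring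
    _ ≤ rexp (ε * ‖f‖) * rexp (f q) := by
        gcongr
        linarith [add_one_le_exp (ε * ‖f‖)]
    _ = rexp (ε * ‖f‖ + f q) := (exp_add _ _).symm
    _ ≤ rexp (log S) := by
        rw [le_div_iff₀ hε] at hnorm
        gcongr
        linarith
    _ = S := exp_log hS

lemma LaplaceIntegrableOn.aestronglyMeasurable (hw : LaplaceIntegrableOn ℓ w μ U)
    (hℓ : AEStronglyMeasurable ℓ μ) (hp : p ∈ U) : AEStronglyMeasurable w μ := by
  have hexp : AEStronglyMeasurable (fun ω => rexp (-ℓ ω p)) μ :=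
    continuous_exp.comp_aestronglyMeasurable (hℓ.apply_continuousLinearMap p).neg
  refine (hexp.smul (hw p hp).aestronglyMeasurable).congr (Eventually.of_forall fun ω => ?_)
  simp [smul_smul, ← exp_add]

lemma aestronglyMeasurable_exp_smul (hℓ : AEStronglyMeasurable ℓ μ)
    (hw : AEStronglyMeasurable w μ) (p : E) :
    AEStronglyMeasurable (fun ω => rexp (ℓ ω p) • w ω) μ :=
  (continuous_exp.comp_aestronglyMeasurable (hℓ.apply_continuousLinearMap p)).smul hw

lemma aestronglyMeasurable_smulRight (hℓ : AEStronglyMeasurable ℓ μ)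
    (hw : AEStronglyMeasurable w μ) : AEStronglyMeasurable (fun ω => (ℓ ω).smulRight (w ω)) μ :=
  (ContinuousLinearMap.smulRightL ℝ E F).aestronglyMeasurable_comp₂ hℓ hw

lemma LaplaceIntegrableOn.exists_bound_smulRight [FiniteDimensional ℝ E]
    (hw : LaplaceIntegrableOn ℓ w μ U) (hU : IsOpen U) (hp : p ∈ U) :
    ∃ bound : Ω → ℝ, Integrable bound μ ∧
      ∀ᶠ q in 𝓝 p, ∀ ω, ‖rexp (ℓ ω q) • (ℓ ω).smulRight (w ω)‖ ≤ bound ω := by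
  obtain ⟨s, δ, hδ, hsU, hball⟩ := exists_ball_subset_convexHull_finset (hU.mem_nhds hp)
  refine ⟨fun ω => (δ / 2)⁻¹ * ∑ b ∈ s, ‖rexp (ℓ ω b) • w ω‖,
    (integrable_finsetSum s fun b hb => (hw b (hsU hb)).norm).const_mul _, ?_⟩
  filter_upwards [Metric.ball_mem_nhds p (half_pos hδ)] with q hq ω
  have hsub : Metric.closedBall q (δ / 2) ⊆ Metric.ball p δ :=
    Metric.closedBall_subset_ball' (by linarith [Metric.mem_ball.1 hq])
  have hkey := norm_mul_exp_le_sum_exp (half_pos hδ) (hsub.trans hball) (ℓ ω)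
  simp only [norm_smul, ContinuousLinearMap.norm_smulRight_apply, norm_of_nonneg (exp_pos _).le,
    ← Finset.sum_mul]
  calc rexp (ℓ ω q) * (‖ℓ ω‖ * ‖w ω‖) = ‖ℓ ω‖ * rexp (ℓ ω q) * ‖w ω‖ := by ring
    _ ≤ (δ / 2)⁻¹ * (∑ b ∈ s, rexp (ℓ ω b)) * ‖w ω‖ := by gcongr
    _ = (δ / 2)⁻¹ * ((∑ b ∈ s, rexp (ℓ ω b)) * ‖w ω‖) := by ring

lemma LaplaceIntegrableOn.smulRight [FiniteDimensional ℝ E] (hw : LaplaceIntegrableOn ℓ w μ U)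
    (hℓ : AEStronglyMeasurable ℓ μ) (hU : IsOpen U) :
    LaplaceIntegrableOn ℓ (fun ω => (ℓ ω).smulRight (w ω)) μ U := fun p hp => by
  obtain ⟨bound, hbound, hle⟩ := hw.exists_bound_smulRight hU hp
  have hmeas := aestronglyMeasurable_smulRight hℓ (hw.aestronglyMeasurable hℓ hp)
  exact hbound.mono' (aestronglyMeasurable_exp_smul hℓ hmeas p)
    (Eventually.of_forall hle.self_of_nhds)

lemma LaplaceIntegrableOn.hasFDerivAt [FiniteDimensional ℝ E] (hw : LaplaceIntegrableOn ℓ w μ U)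
    (hℓ : AEStronglyMeasurable ℓ μ) (hU : IsOpen U) (hp : p ∈ U) :
    HasFDerivAt (laplaceIntegral ℓ w μ)
      (laplaceIntegral ℓ (fun ω => (ℓ ω).smulRight (w ω)) μ p) p := by
  obtain ⟨bound, hbound, hle⟩ := hw.exists_bound_smulRight hU hp
  refine hasFDerivAt_integral_of_dominated_of_fderiv_le (𝕜 := ℝ)
    (F' := fun q ω => rexp (ℓ ω q) • (ℓ ω).smulRight (w ω)) hle
    (Eventually.of_forall
      (aestronglyMeasurable_exp_smul hℓ (hw.aestronglyMeasurable hℓ hp)))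
    (hw p hp) (hw.smulRight hℓ hU p hp).aestronglyMeasurable
    (Eventually.of_forall fun ω q hq => hq ω) hbound (Eventually.of_forall fun ω q _ => ?_)
  convert (ℓ ω).hasFDerivAt.exp.smul_const (w ω) using 1
  ext v
  simp [smul_smul]

-- The induction replaces `F` by `E →L[ℝ] F`, hence the common universe.
theorem LaplaceIntegrableOn.contDiffOn {E F : Type u} [NormedAddCommGroup E] [NormedSpace ℝ E]
    [FiniteDimensional ℝ E] [NormedAddCommGroup F] [NormedSpace ℝ F] {ℓ : Ω → E →L[ℝ] ℝ}
    {w : Ω → F} {U : Set E} (hw : LaplaceIntegrableOn ℓ w μ U)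
    (hℓ : AEStronglyMeasurable ℓ μ) (hU : IsOpen U) :
    ContDiffOn ℝ (⊤ : ℕ∞) (laplaceIntegral ℓ w μ) U := by
  refine contDiffOn_infty.2 fun n => ?_
  induction n generalizing F with
  | zero =>
    exact contDiffOn_zero.2 fun p hp => (hw.hasFDerivAt hℓ hU hp).continuousAt.continuousWithinAt
  | succ n ih =>
    rw [Nat.cast_succ, contDiffOn_succ_iff_fderiv_of_isOpen hU]
    refine ⟨fun p hp => (hw.hasFDerivAt hℓ hU hp).differentiableAt.differentiableWithinAt,
      by simp, ?_⟩
    exact (ih (hw.smulRight hℓ hU)).congr fun p hp => (hw.hasFDerivAt hℓ hU hp).fderiv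

lemma LaplaceIntegrableOn.apply_smul [FiniteDimensional ℝ E] (hw : LaplaceIntegrableOn ℓ w μ U)
    (hℓ : AEStronglyMeasurable ℓ μ) (hU : IsOpen U) (v : E) :
    LaplaceIntegrableOn ℓ (fun ω => ℓ ω v • w ω) μ U := fun p hp =>
  (hw.smulRight hℓ hU p hp).apply_continuousLinearMap v

lemma LaplaceIntegrableOn.add {w' : Ω → F} (hw : LaplaceIntegrableOn ℓ w μ U)
    (hw' : LaplaceIntegrableOn ℓ w' μ U) :
    LaplaceIntegrableOn ℓ (fun ω => w ω + w' ω) μ U := fun p hp => by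
  simpa only [smul_add] using! (hw p hp).add (hw' p hp)

lemma LaplaceIntegrableOn.laplaceIntegral_add {w' : Ω → F} (hw : LaplaceIntegrableOn ℓ w μ U)
    (hw' : LaplaceIntegrableOn ℓ w' μ U) (hp : p ∈ U) :
    laplaceIntegral ℓ (fun ω => w ω + w' ω) μ p
      = laplaceIntegral ℓ w μ p + laplaceIntegral ℓ w' μ p := by
  simp only [laplaceIntegral, smul_add, integral_add (hw p hp) (hw' p hp)]

lemma laplaceIntegral_sum {ι : Type*} {s : Finset ι} {w : ι → Ω → F}
    (hw : ∀ i ∈ s, LaplaceIntegrableOn ℓ (w i) μ U) (hp : p ∈ U) :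
    laplaceIntegral ℓ (fun ω => ∑ i ∈ s, w i ω) μ p = ∑ i ∈ s, laplaceIntegral ℓ (w i) μ p := by
  simp only [laplaceIntegral, Finset.smul_sum, integral_finsetSum s fun i hi => hw i hi p hp]

lemma LaplaceIntegrableOn.laplaceIntegral_smulRight_apply [FiniteDimensional ℝ E]
    (hw : LaplaceIntegrableOn ℓ w μ U) (hℓ : AEStronglyMeasurable ℓ μ) (hU : IsOpen U)
    (hp : p ∈ U) (v : E) :
    laplaceIntegral ℓ (fun ω => (ℓ ω).smulRight (w ω)) μ p v
      = laplaceIntegral ℓ (fun ω => ℓ ω v • w ω) μ p :=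
  ContinuousLinearMap.integral_apply (hw.smulRight hℓ hU p hp) v

lemma LaplaceIntegrableOn.hasDerivAt_comp [FiniteDimensional ℝ E]
    (hw : LaplaceIntegrableOn ℓ w μ U) (hℓ : AEStronglyMeasurable ℓ μ) (hU : IsOpen U)
    {γ : ℝ → E} {γ' : E} {t : ℝ} (hγ : HasDerivAt γ γ' t) (ht : γ t ∈ U) :
    HasDerivAt (fun s => laplaceIntegral ℓ w μ (γ s))
      (laplaceIntegral ℓ (fun ω => ℓ ω γ' • w ω) μ (γ t)) t := by
  rw [← hw.laplaceIntegral_smulRight_apply hℓ hU ht]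
  exact (hw.hasFDerivAt hℓ hU ht).comp_hasDerivAt t hγ

lemma LaplaceIntegrableOn.fderiv_comp_apply [FiniteDimensional ℝ E]
    (hw : LaplaceIntegrableOn ℓ w μ U) (hℓ : AEStronglyMeasurable ℓ μ) (hU : IsOpen U)
    {Φ : X → E} {Φ' : X →L[ℝ] E} {x : X} (hΦ : HasFDerivAt Φ Φ' x) (hx : Φ x ∈ U) (v : X) :
    fderiv ℝ (fun z => laplaceIntegral ℓ w μ (Φ z)) x v
      = laplaceIntegral ℓ (fun ω => ℓ ω (Φ' v) • w ω) μ (Φ x) := by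
  rw [← hw.laplaceIntegral_smulRight_apply hℓ hU hx]
  exact DFunLike.congr_fun ((hw.hasFDerivAt hℓ hU hx).comp x hΦ).fderiv v

lemma LaplaceIntegrableOn.fderiv_comp_smul_apply [FiniteDimensional ℝ E]
    (hw : LaplaceIntegrableOn ℓ w μ U) (hℓ : AEStronglyMeasurable ℓ μ) (hU : IsOpen U)
    {Φ g : X → E} {Φ' g' : X →L[ℝ] E} {x : X} (hΦ : HasFDerivAt Φ Φ' x)
    (hg : HasFDerivAt g g' x) (hx : Φ x ∈ U) (v : X) :
    fderiv ℝ (fun z => laplaceIntegral ℓ (fun ω => ℓ ω (g z) • w ω) μ (Φ z)) x v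
      = laplaceIntegral ℓ (fun ω => ℓ ω (Φ' v) • ℓ ω (g x) • w ω + ℓ ω (g' v) • w ω) μ (Φ x) := by
  have hw' := hw.smulRight hℓ hU
  have heq : (fun z => laplaceIntegral ℓ (fun ω => ℓ ω (g z) • w ω) μ (Φ z)) =ᶠ[𝓝 x]
      fun z => laplaceIntegral ℓ (fun ω => (ℓ ω).smulRight (w ω)) μ (Φ z) (g z) := by
    filter_upwards [hΦ.continuousAt.preimage_mem_nhds (hU.mem_nhds hx)] with z hz
    exact (hw.laplaceIntegral_smulRight_apply hℓ hU hz _).symm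
  have hderiv := ((hw'.hasFDerivAt hℓ hU hx).comp x hΦ).clm_apply hg
  rw [((hw.apply_smul hℓ hU _).apply_smul hℓ hU _).laplaceIntegral_add (hw.apply_smul hℓ hU _) hx,
    ← hw.laplaceIntegral_smulRight_apply hℓ hU hx, heq.fderiv_eq]
  refine (DFunLike.congr_fun hderiv.fderiv v).trans ?_
  have hsecond : laplaceIntegral ℓ (fun ω => (ℓ ω).smulRight ((ℓ ω).smulRight (w ω))) μ (Φ x)
      (Φ' v) (g x) = laplaceIntegral ℓ (fun ω => ℓ ω (Φ' v) • ℓ ω (g x) • w ω) μ (Φ x) := by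
    rw [hw'.laplaceIntegral_smulRight_apply hℓ hU hx]
    exact ContinuousLinearMap.integral_apply (hw'.apply_smul hℓ hU _ _ hx) _
  rw [← hsecond]
  simp [add_comm]

end LaplaceIntegral

section Gaussian

variable {E : Type*} [NormedAddCommGroup E]

/-- The parameters `(c, ξ, a)` for which `exp (c + ⟪y, ξ⟫ + a ‖y‖²)` decays in `y`. -/
def gaussianDomain (E : Type*) : Set (ℝ × E × ℝ) := {p | p.2.2 < 0}

lemma isOpen_gaussianDomain : IsOpen (gaussianDomain E) :=
  isOpen_lt (by fun_prop) continuous_const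

/-- Integrability of `f` against all centred Gaussians. -/
def GaussianIntegrable [MeasurableSpace E] (f : E → ℝ) (μ : Measure E) : Prop :=
  ∀ a > 0, Integrable (fun y => rexp (-a * ‖y‖ ^ 2) * f y) μ

lemma GaussianIntegrable.aestronglyMeasurable [MeasurableSpace E] [OpensMeasurableSpace E]
    {μ : Measure E} {f : E → ℝ} (hf : GaussianIntegrable f μ) : AEStronglyMeasurable f μ := by
  have hexp : Continuous fun y : E => rexp (‖y‖ ^ 2) := by fun_prop
  refine (hexp.aestronglyMeasurable.mul (hf 1 one_pos).aestronglyMeasurable).congr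
    (Eventually.of_forall fun y => ?_)
  simp [← mul_assoc, ← exp_add]

variable [InnerProductSpace ℝ E]

/-- The exponents of Gaussians in `y`, as linear functionals of the parameters:
`(c, ξ, a) ↦ c + ⟪y, ξ⟫ + a ‖y‖²`. -/
def gaussianExponent (y : E) : ℝ × E × ℝ →L[ℝ] ℝ :=
  (ContinuousLinearMap.id ℝ ℝ).coprod
    ((innerSL ℝ y).coprod (‖y‖ ^ 2 • ContinuousLinearMap.id ℝ ℝ))

lemma gaussianExponent_apply (y : E) (p : ℝ × E × ℝ) :
    gaussianExponent y p = p.1 + (inner ℝ y p.2.1 + ‖y‖ ^ 2 * p.2.2) := by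
  simp [gaussianExponent]

lemma gaussianExponent_scalar (y : E) (c : ℝ) : gaussianExponent y (c, 0, 0) = c := by
  simp [gaussianExponent_apply]

lemma continuous_gaussianExponent : Continuous (gaussianExponent (E := E)) := by
  unfold gaussianExponent
  fun_prop

lemma gaussianExponent_le (y : E) {p : ℝ × E × ℝ} (hp : p ∈ gaussianDomain E) :
    gaussianExponent y p ≤ p.1 - ‖p.2.1‖ ^ 2 / (2 * p.2.2) + p.2.2 / 2 * ‖y‖ ^ 2 := by
  obtain ⟨c, ξ, a⟩ := p
  have ha : a < 0 := hp
  have hsq : c - ‖ξ‖ ^ 2 / (2 * a) + a / 2 * ‖y‖ ^ 2 - (c + (‖y‖ * ‖ξ‖ + ‖y‖ ^ 2 * a))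
      = (‖ξ‖ + a * ‖y‖) ^ 2 / (2 * -a) := by
    field_simp [ha.ne]
    ring
  have hnonneg : 0 ≤ (‖ξ‖ + a * ‖y‖) ^ 2 / (2 * -a) := div_nonneg (sq_nonneg _) (by linarith)
  rw [gaussianExponent_apply]
  linarith [real_inner_le_norm y ξ]

variable [MeasurableSpace E] [BorelSpace E] {μ : Measure E} {f : E → ℝ}

lemma aestronglyMeasurable_gaussianExponent [FiniteDimensional ℝ E] :
    AEStronglyMeasurable (gaussianExponent (E := E)) μ :=
  have := FiniteDimensional.proper ℝ E
  continuous_gaussianExponent.aestronglyMeasurable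

lemma GaussianIntegrable.laplaceIntegrableOn (hf : GaussianIntegrable f μ) :
    LaplaceIntegrableOn gaussianExponent f μ (gaussianDomain E) := fun p hp => by
  have ha : 0 < -(p.2.2 / 2) := by linarith [show p.2.2 < 0 from hp]
  have hexp : Continuous fun y : E => rexp (gaussianExponent y p) :=
    continuous_exp.comp (continuous_gaussianExponent.clm_apply continuous_const)
  refine ((hf _ ha).norm.const_mul (rexp (p.1 - ‖p.2.1‖ ^ 2 / (2 * p.2.2)))).mono'
    (hexp.aestronglyMeasurable.smul hf.aestronglyMeasurable) (Eventually.of_forall fun y => ?_)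
  rw [norm_smul, norm_mul, ← mul_assoc, norm_of_nonneg (exp_pos _).le,
    norm_of_nonneg (exp_pos _).le, ← exp_add, neg_neg]
  gcongr
  exact gaussianExponent_le y hp

lemma GaussianIntegrable.of_bounded [FiniteDimensional ℝ E]
    (hf : AEStronglyMeasurable f volume) {C : ℝ} (hC : ∀ y, ‖f y‖ ≤ C) :
    GaussianIntegrable f volume := fun a ha => by
  have hgauss : Integrable fun y : E => rexp (-a * ‖y‖ ^ 2) := by
    refine (GaussianFourier.integrable_cexp_neg_mul_sq_norm_add (b := (a : ℂ)) (by simpa) 0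
      (0 : E)).norm.congr (Eventually.of_forall fun y => ?_)
    simp [Complex.norm_exp, ← Complex.ofReal_pow]
  exact hgauss.mul_bdd hf (Eventually.of_forall hC)

end Gaussian

section HeatFlow

variable {d : ℕ} {α t : ℝ} {f : Euc d → ℝ}

/-- The parameters `(c, ξ, a)` at which `exp (c + ⟪y, ξ⟫ + a ‖y‖²)` is the heat kernel between `x`
and `y` at time `t`. -/
def heatParam (d : ℕ) (α t : ℝ) (x : Euc d) : ℝ × Euc d × ℝ :=
  (-(d : ℝ) / 2 * log (2 * π * α * t) - ‖x‖ ^ 2 / (2 * α * t), (α * t)⁻¹ • x, -(2 * α * t)⁻¹)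

/-- The derivative of `heatParam d α t` at `x`. -/
def heatParamDeriv (α t : ℝ) (x : Euc d) : Euc d →L[ℝ] ℝ × Euc d × ℝ :=
  (-(α * t)⁻¹ • innerSL ℝ x).prod (((α * t)⁻¹ • ContinuousLinearMap.id ℝ (Euc d)).prod 0)

lemma heatParamDeriv_apply (α t : ℝ) (x v : Euc d) :
    heatParamDeriv α t x v = (-(α * t)⁻¹ * inner ℝ x v, (α * t)⁻¹ • v, 0) := by
  simp [heatParamDeriv]

lemma heatParam_mem_gaussianDomain (hα : 0 < α) (ht : 0 < t) (x : Euc d) :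
    heatParam d α t x ∈ gaussianDomain (Euc d) := by
  simp only [heatParam, gaussianDomain, mem_ofPred_eq, neg_lt_zero]
  positivity

lemma exp_gaussianExponent_heatParam (hα : 0 < α) (ht : 0 < t) (x y : Euc d) :
    rexp (gaussianExponent y (heatParam d α t x))
      = (2 * π * α * t) ^ (-(d : ℝ) / 2) * rexp (-‖x - y‖ ^ 2 / (2 * α * t)) := by
  rw [rpow_def_of_pos (by positivity), ← exp_add, gaussianExponent_apply, norm_sub_sq_real,
    real_inner_comm]
  simp only [heatParam, inner_smul_left, conj_trivial]
  congr 1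
  field

lemma heatP_eq_laplaceIntegral (hα : 0 < α) (ht : 0 < t) (f : Euc d → ℝ) (x : Euc d) :
    heatP d α t f x = laplaceIntegral gaussianExponent f volume (heatParam d α t x) := by
  simp only [heatP, if_neg ht.ne', laplaceIntegral, exp_gaussianExponent_heatParam hα ht,
    smul_eq_mul]

lemma contDiffOn_heatParam (hα : 0 < α) :
    ContDiffOn ℝ (⊤ : ℕ∞) (fun p : ℝ × Euc d => heatParam d α p.1 p.2) (Ioi 0 ×ˢ univ) := by
  have hpos : ∀ p ∈ Ioi (0 : ℝ) ×ˢ (univ : Set (Euc d)), 0 < p.1 := fun p hp => hp.1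
  have hinv : ∀ c > 0, ContDiffOn ℝ (⊤ : ℕ∞) (fun p : ℝ × Euc d => (c * p.1)⁻¹) (Ioi 0 ×ˢ univ) :=
    fun c hc => (by fun_prop : ContDiffOn ℝ _ (fun p : ℝ × Euc d => c * p.1) _).inv
      fun p hp => (mul_pos hc (hpos p hp)).ne'
  have hlog : ContDiffOn ℝ (⊤ : ℕ∞) (fun p : ℝ × Euc d => log (2 * π * α * p.1)) (Ioi 0 ×ˢ univ) :=
    ContDiffOn.log (by fun_prop) fun p hp => (mul_pos (by positivity) (hpos p hp)).ne'
  have hsq : ContDiffOn ℝ (⊤ : ℕ∞) (fun p : ℝ × Euc d => ‖p.2‖ ^ 2) (Ioi 0 ×ˢ univ) :=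
    (contDiff_snd.norm_sq ℝ).contDiffOn
  exact ((contDiffOn_const.mul hlog).sub (hsq.mul (hinv (2 * α) (by positivity)))).prodMk
    (((hinv α hα).smul contDiffOn_snd).prodMk (hinv (2 * α) (by positivity)).neg)

theorem contDiffOn_heatP (hα : 0 < α) (hf : GaussianIntegrable f volume) :
    ContDiffOn ℝ (⊤ : ℕ∞) (fun p : ℝ × Euc d => heatP d α p.1 f p.2) (Ioi 0 ×ˢ univ) :=
  ((hf.laplaceIntegrableOn.contDiffOn aestronglyMeasurable_gaussianExponent
    isOpen_gaussianDomain).comp (contDiffOn_heatParam hα) fun p hp =>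
      heatParam_mem_gaussianDomain hα hp.1 p.2).congr fun p hp =>
        heatP_eq_laplaceIntegral hα hp.1 f p.2

lemma contDiff_heatP (hα : 0 < α) (ht : 0 < t) (hf : GaussianIntegrable f volume) :
    ContDiff ℝ (⊤ : ℕ∞) (heatP d α t f) :=
  contDiffOn_univ.1 ((contDiffOn_heatP hα hf).comp
    (contDiff_const.prodMk contDiff_id).contDiffOn fun _ _ => ⟨ht, trivial⟩)

lemma heatP_pos (hα : 0 < α) (ht : 0 < t) (hf : GaussianIntegrable f volume)
    (hpos : ∀ y, 0 < f y) (x : Euc d) : 0 < heatP d α t f x := by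
  have hint := hf.laplaceIntegrableOn _ (heatParam_mem_gaussianDomain hα ht x)
  have hker : ∀ y, 0 < rexp (gaussianExponent y (heatParam d α t x)) • f y := fun y =>
    mul_pos (exp_pos _) (hpos y)
  rw [heatP_eq_laplaceIntegral hα ht, laplaceIntegral,
    integral_pos_iff_support_of_nonneg (fun y => (hker y).le) hint,
    Function.support_eq_univ fun y => (hker y).ne']
  exact isOpen_univ.measure_pos volume univ_nonempty

lemma hasFDerivAt_heatParam (α t : ℝ) (x : Euc d) :
    HasFDerivAt (heatParam d α t) (heatParamDeriv α t x) x := by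
  have hsq := (hasStrictFDerivAt_norm_sq x).hasFDerivAt.mul_const (2 * α * t)⁻¹
  have hsmul := (hasFDerivAt_id (𝕜 := ℝ) x).const_smul (α * t)⁻¹
  have hconst := hasFDerivAt_const (𝕜 := ℝ) (-(2 * α * t)⁻¹) x
  refine ((hsq.const_sub _).prodMk (hsmul.prodMk hconst)).congr_fderiv ?_
  ext v <;> simp only [heatParamDeriv, ContinuousLinearMap.prod_apply, neg_apply, smul_apply,
    coe_innerSL_apply, ContinuousLinearMap.id_apply, zero_apply, PiLp.smul_apply, nsmul_eq_mul,
    Nat.cast_ofNat, smul_eq_mul, mul_inv_rev]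
  ring

lemma hasFDerivAt_heatParamDeriv (α t : ℝ) (v x : Euc d) :
    HasFDerivAt (fun z => heatParamDeriv α t z v)
      ((-(α * t)⁻¹ • innerSL ℝ v).prod (0 : Euc d →L[ℝ] Euc d × ℝ)) x := by
  have hinner : HasFDerivAt (fun z => inner ℝ z v) (innerSL ℝ v) x := by
    simpa only [innerSL_apply_apply, real_inner_comm] using! (innerSL ℝ v).hasFDerivAt
  simp only [heatParamDeriv_apply]
  exact (hinner.const_mul _).prodMk (hasFDerivAt_const _ x)

lemma hasDerivAt_heatParam (hα : 0 < α) (ht : 0 < t) (x : Euc d) :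
    HasDerivAt (fun s => heatParam d α s x)
      (-(d : ℝ) / (2 * t) + ‖x‖ ^ 2 / (2 * α * t ^ 2), -(α * t ^ 2)⁻¹ • x, (2 * α * t ^ 2)⁻¹)
      t := by
  have hlog : HasDerivAt (fun s => log (2 * π * α * s)) t⁻¹ t := by
    have h := ((hasDerivAt_id t).const_mul (2 * π * α)).log (mul_pos (by positivity) ht).ne'
    exact h.congr_deriv (by simp only [mul_one, id_eq]; field)
  have hinv : ∀ c > 0, HasDerivAt (fun s => (c * s)⁻¹) (-(c * t ^ 2)⁻¹) t := fun c hc => by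
    have h := ((hasDerivAt_id t).const_mul c).fun_inv (mul_pos hc ht).ne'
    exact h.congr_deriv (by simp only [mul_one, id_eq]; field)
  have hinv₂ := hinv (2 * α) (by positivity)
  refine ((hlog.const_mul _).sub (hinv₂.const_mul _)).prodMk
    (((hinv α hα).smul_const x).prodMk hinv₂.neg) |>.congr_deriv ?_
  ext <;> simp only [PiLp.neg_apply, PiLp.smul_apply, neg_smul, mul_neg, sub_neg_eq_add, neg_neg,
    mul_inv_rev]
  field

lemma gaussianExponent_heatParamDeriv (α t : ℝ) (x v y : Euc d) :
    gaussianExponent y (heatParamDeriv α t x v) = (α * t)⁻¹ * inner ℝ (y - x) v := by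
  simp only [gaussianExponent_apply, heatParamDeriv_apply, inner_smul_right, inner_sub_left]
  ring

lemma fderiv_fderiv_heatP (hα : 0 < α) (ht : 0 < t) (hf : GaussianIntegrable f volume)
    (x v : Euc d) :
    fderiv ℝ (fun z => fderiv ℝ (heatP d α t f) z v) x v
      = laplaceIntegral gaussianExponent
          (fun y => gaussianExponent y (heatParamDeriv α t x v)
              • gaussianExponent y (heatParamDeriv α t x v) • f y
            + gaussianExponent y ((-(α * t)⁻¹ * ‖v‖ ^ 2, 0, 0)) • f y) volume
          (heatParam d α t x) := by
  have hw := hf.laplaceIntegrableOn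
  have hfirst : (fun z => fderiv ℝ (heatP d α t f) z v) = fun z => laplaceIntegral gaussianExponent
      (fun y => gaussianExponent y (heatParamDeriv α t z v) • f y) volume (heatParam d α t z) := by
    ext z
    rw [funext (heatP_eq_laplaceIntegral hα ht f)]
    exact hw.fderiv_comp_apply aestronglyMeasurable_gaussianExponent isOpen_gaussianDomain
      (hasFDerivAt_heatParam α t z) (heatParam_mem_gaussianDomain hα ht z) v
  rw [hfirst, hw.fderiv_comp_smul_apply aestronglyMeasurable_gaussianExponent isOpen_gaussianDomain
    (hasFDerivAt_heatParam α t x) (hasFDerivAt_heatParamDeriv α t v x)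
    (heatParam_mem_gaussianDomain hα ht x)]
  simp [Prod.zero_eq_mk]

lemma lap_heatP (hα : 0 < α) (ht : 0 < t) (hf : GaussianIntegrable f volume) (x : Euc d) :
    lap d (heatP d α t f) x
      = laplaceIntegral gaussianExponent
          (fun y => (‖y - x‖ ^ 2 / (α * t) ^ 2 - d / (α * t)) • f y) volume
          (heatParam d α t x) := by
  have hw := hf.laplaceIntegrableOn
  have hw₁ := hw.apply_smul aestronglyMeasurable_gaussianExponent isOpen_gaussianDomain
  have hw₂ := fun v => (hw₁ v).apply_smul aestronglyMeasurable_gaussianExponent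
    isOpen_gaussianDomain v
  simp only [lap, fderiv_fderiv_heatP hα ht hf]
  rw [← laplaceIntegral_sum (fun i _ => (hw₂ _).add (hw₁ _)) (heatParam_mem_gaussianDomain hα ht x)]
  congr 1 with y
  have hquad : ∑ i, gaussianExponent y (heatParamDeriv α t x (EuclideanSpace.single i 1)) ^ 2
      = ‖y - x‖ ^ 2 / (α * t) ^ 2 := by
    simp only [gaussianExponent_heatParamDeriv, EuclideanSpace.inner_single_right, conj_trivial,
      one_mul, mul_pow, ← Finset.mul_sum, ← EuclideanSpace.real_norm_sq_eq]
    field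
  simp only [gaussianExponent_scalar, PiLp.norm_single, norm_one, one_pow, mul_one, smul_smul,
    ← add_smul, ← Finset.sum_smul, ← sq, Finset.sum_add_distrib, hquad, Finset.sum_const,
    Finset.card_univ, Fintype.card_fin, nsmul_eq_mul]
  ring_nf

theorem hasDerivAt_heatP (hα : 0 < α) (ht : 0 < t) (hf : GaussianIntegrable f volume) (x : Euc d) :
    HasDerivAt (fun s => heatP d α s f x) (α / 2 * lap d (heatP d α t f) x) t := by
  have heq : (fun s => heatP d α s f x) =ᶠ[nhds t] fun s =>
      laplaceIntegral gaussianExponent f volume (heatParam d α s x) := by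
    filter_upwards [Ioi_mem_nhds ht] with s hs using heatP_eq_laplaceIntegral hα hs f x
  refine ((hf.laplaceIntegrableOn.hasDerivAt_comp aestronglyMeasurable_gaussianExponent
    isOpen_gaussianDomain (hasDerivAt_heatParam hα ht x)
    (heatParam_mem_gaussianDomain hα ht x)).congr_of_eventuallyEq heq).congr_deriv ?_
  rw [lap_heatP hα ht hf, laplaceIntegral, laplaceIntegral, ← integral_const_mul]
  congr 1 with y
  -- The integrands agree because the heat kernel itself solves the heat equation.
  simp only [gaussianExponent_apply, inner_smul_right, norm_sub_sq_real, smul_eq_mul]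
  field

end HeatFlow

section ColeHopf

variable {d : ℕ} {u : Euc d → ℝ} {x : Euc d}

lemma norm_gradient {H : Type*} [NormedAddCommGroup H] [InnerProductSpace ℝ H]
    [CompleteSpace H] (u : H → ℝ) (x : H) : ‖gradient u x‖ = ‖fderiv ℝ u x‖ :=
  LinearIsometryEquiv.norm_map _ _

lemma norm_gradient_comp {H : Type*} [NormedAddCommGroup H] [InnerProductSpace ℝ H]
    [CompleteSpace H] {u : H → ℝ} {x : H} {g : ℝ → ℝ} {g' : ℝ}
    (hg : HasDerivAt g g' (u x)) (hu : DifferentiableAt ℝ u x) :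
    ‖gradient (fun z => g (u z)) x‖ = |g'| * ‖gradient u x‖ := by
  have hcomp : HasFDerivAt (fun z => g (u z)) (g' • fderiv ℝ u x) x :=
    hg.comp_hasFDerivAt x hu.hasFDerivAt
  rw [norm_gradient, norm_gradient, hcomp.fderiv, norm_smul, norm_eq_abs]

lemma norm_gradient_sq (u : Euc d → ℝ) (x : Euc d) :
    ‖gradient u x‖ ^ 2 = ∑ i, fderiv ℝ u x (EuclideanSpace.single i 1) ^ 2 := by
  simpa [norm_gradient] using (EuclideanSpace.basisFun (Fin d) ℝ).norm_dual (fderiv ℝ u x)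

lemma lap_comp {g g' : ℝ → ℝ} {g'' : ℝ} (hu : ContDiff ℝ 2 u)
    (hg : ∀ z, HasDerivAt g (g' (u z)) (u z)) (hg' : HasDerivAt g' g'' (u x)) :
    lap d (fun z => g (u z)) x = g' (u x) * lap d u x + g'' * ‖gradient u x‖ ^ 2 := by
  have hdu : Differentiable ℝ u := hu.differentiable two_ne_zero
  have hfderiv : fderiv ℝ (fun z => g (u z)) = fun z => g' (u z) • fderiv ℝ u z :=
    funext fun z => ((hg z).comp_hasFDerivAt z (hdu z).hasFDerivAt).fderiv
  have hsecond : ∀ v, fderiv ℝ (fun z => fderiv ℝ (fun z => g (u z)) z v) x v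
      = g' (u x) * fderiv ℝ (fun z => fderiv ℝ u z v) x v + g'' * fderiv ℝ u x v ^ 2 := fun v => by
    have hdv : DifferentiableAt ℝ (fun z => fderiv ℝ u z v) x :=
      ((hu.fderiv_right (m := 1) le_rfl).differentiable one_ne_zero x).clm_apply
        (differentiableAt_const v)
    have hmul := (hg'.comp_hasFDerivAt x (hdu x).hasFDerivAt).mul hdv.hasFDerivAt
    simp only [hfderiv]
    refine (DFunLike.congr_fun hmul.fderiv v).trans ?_
    simp only [Function.comp_apply, add_apply, smul_apply, smul_eq_mul]
    ring
  simp only [lap, hsecond, Finset.sum_add_distrib, ← Finset.mul_sum, norm_gradient_sq]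

lemma hamiltonian_neg_mul_log (hu : ContDiff ℝ 2 u) (hpos : ∀ z, 0 < u z) (α : ℝ) (x : Euc d) :
    α / 2 * lap d (fun z => -α * log (u z)) x
      - 1 / 2 * ‖gradient (fun z => -α * log (u z)) x‖ ^ 2
      = -α * (α / 2 * lap d u x / u x) := by
  have hlog : ∀ z, HasDerivAt (fun r => -α * log r) (-α * (u z)⁻¹) (u z) := fun z =>
    (hasDerivAt_log (hpos z).ne').const_mul (-α)
  have hinv : HasDerivAt (fun r : ℝ => -α * r⁻¹) (-α * -(u x ^ 2)⁻¹) (u x) :=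
    (hasDerivAt_inv (hpos x).ne').const_mul (-α)
  rw [lap_comp hu hlog hinv, norm_gradient_comp (hlog x) (hu.differentiable two_ne_zero x),
    mul_pow, sq_abs]
  ring

variable {α t : ℝ} {φ : Euc d → ℝ}

lemma coleHopf_zero (hα : α ≠ 0) (φ : Euc d → ℝ) (x : Euc d) : coleHopf d α 0 φ x = φ x := by
  simp only [coleHopf, heatP, if_true, log_exp]
  field

lemma contDiffOn_coleHopf (hα : 0 < α)
    (hφ : GaussianIntegrable (fun y => rexp (-φ y / α)) volume) :
    ContDiffOn ℝ (⊤ : ℕ∞) (fun p : ℝ × Euc d => coleHopf d α p.1 φ p.2) (Ioi 0 ×ˢ univ) :=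
  contDiffOn_const.mul ((contDiffOn_heatP hα hφ).log fun p hp =>
    (heatP_pos hα hp.1 hφ (fun _ => exp_pos _) p.2).ne')

lemma hasDerivAt_coleHopf (hα : 0 < α) (ht : 0 < t)
    (hφ : GaussianIntegrable (fun y => rexp (-φ y / α)) volume) (x : Euc d) :
    HasDerivAt (fun s => coleHopf d α s φ x)
      (α / 2 * lap d (coleHopf d α t φ) x - 1 / 2 * ‖gradient (coleHopf d α t φ) x‖ ^ 2) t := by
  have hpos := heatP_pos hα ht hφ fun _ => exp_pos _
  have hsmooth := contDiff_infty.1 (contDiff_heatP hα ht hφ) 2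
  exact (((hasDerivAt_heatP hα ht hφ x).log (hpos x).ne').const_mul (-α)).congr_deriv
    (hamiltonian_neg_mul_log hsmooth hpos α x).symm

lemma gaussianIntegrable_exp_schwartzMap (hα : 0 < α)
    (φ : SchwartzMap (Euc d) ℝ) : GaussianIntegrable (fun y => rexp (-φ y / α)) volume := by
  have hcont : Continuous fun y => rexp (-φ y / α) := by
    have := φ.continuous
    fun_prop
  refine .of_bounded hcont.aestronglyMeasurable
    (C := rexp (‖φ.toBoundedContinuousFunction‖ / α)) fun y => ?_
  rw [norm_of_nonneg (exp_pos _).le]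
  gcongr
  exact (neg_le_abs _).trans (φ.toBoundedContinuousFunction.norm_coe_le_norm y)

end ColeHopf

theorem statement0_general {d : ℕ} {α : ℝ} (hα : 0 < α) {φ : Euc d → ℝ}
    (hφ : GaussianIntegrable (fun y => rexp (-φ y / α)) volume) :
    (∀ x, coleHopf d α 0 φ x = φ x) ∧
    ContDiffOn ℝ (⊤ : ℕ∞) (fun p : ℝ × Euc d => coleHopf d α p.1 φ p.2) (Ioi 0 ×ˢ univ) ∧
    ∀ t > 0, ∀ x : Euc d,
      HasDerivAt (fun s => coleHopf d α s φ x)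
        (α / 2 * lap d (coleHopf d α t φ) x - 1 / 2 * ‖gradient (coleHopf d α t φ) x‖ ^ 2) t :=
  ⟨coleHopf_zero hα.ne' φ, contDiffOn_coleHopf hα hφ, fun _ ht => hasDerivAt_coleHopf hα ht hφ⟩

/-- `v(t,x) := (V_t φ)(x)` satisfies `v(0,·) = φ`, is smooth on `(0,∞) × ℝ^d`,
and solves the Hamilton–Jacobi equation `∂_t v = (α/2) Δ v - (1/2)|∇v|²` for `t > 0`. -/
theorem statement0 (d : ℕ) (hd : 1 ≤ d) (α : ℝ) (hα : 0 < α)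
    (φ : SchwartzMap (Euc d) ℝ) :
    (∀ x, coleHopf d α 0 (fun y => φ y) x = φ x) ∧
    ContDiffOn ℝ (⊤ : ℕ∞)
      (fun p : ℝ × Euc d => coleHopf d α p.1 (fun y => φ y) p.2)
      (Set.Ioi (0 : ℝ) ×ˢ Set.univ) ∧
    ∀ t > (0 : ℝ), ∀ x : Euc d,
      HasDerivAt (fun s => coleHopf d α s (fun y => φ y) x)
        (α / 2 * lap d (coleHopf d α t (fun y => φ y)) x
          - 1 / 2 * ‖gradient (coleHopf d α t (fun y => φ y)) x‖ ^ 2) t :=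
  statement0_general hα (gaussianIntegrable_exp_schwartzMap hα φ)
end
end

section
/- Let φ be a Schwartz function on ℝ^d. Then P_t φ is a Schwartz function for every t ≥ 0, the map t ↦ P_t φ is continuous from [0,∞) to the Schwartz space S (with its Fréchet topology), the map t ↦ P_t φ(x) is differentiable in t for each x with ∂_t P_t φ = (α/2) Δ P_t φ, and t ↦ ∂_t P_t φ is also continuous from [0,∞) to S. -/
open MeasureTheory Real Filter Set

noncomputable section

/-!
Writing `Z` for a standard Gaussian vector, `P_t φ (x) = 𝔼 φ(x + √(α t) Z)`. In the variable
`s = √(α t)` the average `𝔼 φ(x + s Z)` has no singularity: translating by `s Z` costs a factor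
polynomial in `‖Z‖` in each weighted sup norm, so the average of a Schwartz function is Schwartz and
locally Lipschitz in `s` for every Schwartz seminorm. Gaussian integration by parts gives
`∂_s 𝔼 φ(x + s Z) = 𝔼 ⟪∇φ(x + s Z), Z⟫ = s 𝔼 (Δφ)(x + s Z)`, and the factor `s` cancels the
singularity of `∂_t √(α t) = α / (2 √(α t))`, which yields the derivative up to `t = 0`. The
Laplacian commutes with averaging, so `∂_t P_t φ = (α / 2) P_t (Δφ)`, and its continuity in `S` is
that of `t ↦ P_t ψ` for `ψ = Δφ`.
-/

open ProbabilityTheory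
open scoped SchwartzMap LineDeriv Laplacian ContDiff

section FiniteMoments

variable {E : Type*} [NormedAddCommGroup E] [MeasurableSpace E] {μ : Measure E}

/-- A measure with finite absolute moments of all orders. The moment of order zero is included, so
such a measure is finite. -/
class HasFiniteMoments (μ : Measure E) : Prop where
  integrable_norm_pow (k : ℕ) : Integrable (fun z => ‖z‖ ^ k) μ

instance HasFiniteMoments.isFiniteMeasure [HasFiniteMoments μ] : IsFiniteMeasure μ := by
  have h : Integrable (fun _ : E => (1 : ℝ)) μ := by
    simpa using HasFiniteMoments.integrable_norm_pow (μ := μ) 0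
  exact (integrable_const_iff_isFiniteMeasure one_ne_zero).1 h

theorem HasFiniteMoments.integrable_one_add_norm_pow [HasFiniteMoments μ] (k : ℕ) :
    Integrable (fun z => (1 + ‖z‖) ^ k) μ := by
  simp_rw [add_comm (1 : ℝ), add_pow, one_pow, mul_one]
  exact integrable_finsetSum _ fun i _ => (integrable_norm_pow i).mul_const _

end FiniteMoments

section ScaledAverage

variable {E F : Type*} [NormedAddCommGroup E] [NormedSpace ℝ E]
  [NormedAddCommGroup F] {f : E → F} {k : ℕ} {C C' S r s : ℝ}

theorem one_add_norm_le_mul_of_abs_le (hs : |s| ≤ S) (x z : E) :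
    1 + ‖x‖ ≤ (1 + ‖x + s • z‖) * ((1 + S) * (1 + ‖z‖)) := by
  have hS : 0 ≤ S := (abs_nonneg s).trans hs
  have htri : ‖x‖ ≤ ‖x + s • z‖ + ‖s • z‖ := by
    simpa using norm_sub_le (x + s • z) (s • z)
  have hsz : ‖s • z‖ ≤ S * ‖z‖ := by
    rw [norm_smul, Real.norm_eq_abs]
    gcongr
  calc 1 + ‖x‖ ≤ 1 + (‖x + s • z‖ + S * ‖z‖) := by linarith
    _ ≤ (1 + ‖x + s • z‖) * ((1 + S) * (1 + ‖z‖)) := by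
      have : 0 ≤ ‖x + s • z‖ * (S + ‖z‖ + S * ‖z‖) + S + ‖z‖ := by positivity
      linarith

theorem norm_pow_mul_norm_comp_add_smul_le (hf : ∀ y, (1 + ‖y‖) ^ k * ‖f y‖ ≤ C)
    (hs : |s| ≤ S) (x z : E) :
    ‖x‖ ^ k * ‖f (x + s • z)‖ ≤ C * (1 + S) ^ k * (1 + ‖z‖) ^ k := by
  have hS : 0 ≤ S := (abs_nonneg s).trans hs
  calc ‖x‖ ^ k * ‖f (x + s • z)‖
      ≤ ((1 + ‖x + s • z‖) * ((1 + S) * (1 + ‖z‖))) ^ k * ‖f (x + s • z)‖ := by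
        gcongr
        linarith [one_add_norm_le_mul_of_abs_le hs x z]
    _ = ((1 + ‖x + s • z‖) ^ k * ‖f (x + s • z)‖) * (1 + S) ^ k * (1 + ‖z‖) ^ k := by
        rw [mul_pow, mul_pow]
        ring
    _ ≤ C * (1 + S) ^ k * (1 + ‖z‖) ^ k := by
        gcongr
        exact hf _

theorem integrable_comp_add_smul [MeasurableSpace E] [BorelSpace E]
    [SecondCountableTopology E] {μ : Measure E} [IsFiniteMeasure μ] (hf : Continuous f)
    (hC : ∀ y, ‖f y‖ ≤ C) (s : ℝ) (x : E) : Integrable (fun z => f (x + s • z)) μ :=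
  .of_bound (hf.comp (by fun_prop)).aestronglyMeasurable C (ae_of_all _ fun _ => hC _)

variable [NormedSpace ℝ F] {f' : E → E →L[ℝ] F}

theorem hasDerivAt_comp_add_smul (hf : ∀ y, HasFDerivAt f (f' y) y) (x z : E) (s : ℝ) :
    HasDerivAt (fun u : ℝ => f (x + u • z)) (f' (x + s • z) z) s := by
  have hline : HasDerivAt (fun u : ℝ => x + u • z) z s := by
    simpa using ((hasDerivAt_id s).smul_const z).const_add x
  exact (hf (x + s • z)).comp_hasDerivAt s hline

theorem norm_pow_mul_norm_comp_add_smul_sub_le (hf : ∀ y, HasFDerivAt f (f' y) y)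
    (hf' : ∀ y, (1 + ‖y‖) ^ k * ‖f' y‖ ≤ C) (hs : |s| ≤ S) (hr : |r| ≤ S) (x z : E) :
    ‖x‖ ^ k * ‖f (x + s • z) - f (x + r • z)‖ ≤
      C * (1 + S) ^ k * (1 + ‖z‖) ^ (k + 1) * |s - r| := by
  have hderiv : ∀ u ∈ Icc (-S) S, HasDerivWithinAt (fun u : ℝ => ‖x‖ ^ k • f (x + u • z))
      (‖x‖ ^ k • f' (x + u • z) z) (Icc (-S) S) u := fun u _ =>
    ((hasDerivAt_comp_add_smul hf x z u).const_smul _).hasDerivWithinAt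
  have hbound : ∀ u ∈ Icc (-S) S,
      ‖‖x‖ ^ k • f' (x + u • z) z‖ ≤ C * (1 + S) ^ k * (1 + ‖z‖) ^ (k + 1) := by
    intro u hu
    rw [norm_smul, norm_pow, norm_norm]
    calc ‖x‖ ^ k * ‖f' (x + u • z) z‖
        ≤ ‖x‖ ^ k * (‖f' (x + u • z)‖ * (1 + ‖z‖)) := by
          gcongr
          exact (f' _).le_of_opNorm_le_of_le le_rfl (by linarith)
      _ = ‖x‖ ^ k * ‖f' (x + u • z)‖ * (1 + ‖z‖) := by ring
      _ ≤ C * (1 + S) ^ k * (1 + ‖z‖) ^ k * (1 + ‖z‖) := by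
          gcongr ?_ * _
          exact norm_pow_mul_norm_comp_add_smul_le hf' (abs_le.2 hu) x z
      _ = C * (1 + S) ^ k * (1 + ‖z‖) ^ (k + 1) := by ring
  simpa [← smul_sub, norm_smul] using
    (convex_Icc (-S) S).norm_image_sub_le_of_norm_hasDerivWithin_le hderiv hbound
      (abs_le.1 hr) (abs_le.1 hs)

theorem integral_curryLeft {X : Type*} [MeasurableSpace X] {μ : Measure X} {n : ℕ}
    (g : X → E [×(n + 1)]→L[ℝ] F) : ∫ x, (g x).curryLeft ∂μ = (∫ x, g x ∂μ).curryLeft :=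
  ContinuousLinearEquiv.integral_comp_comm (𝕜 := ℝ) (E := E [×(n + 1)]→L[ℝ] F)
    (F := E →L[ℝ] E [×n]→L[ℝ] F)
    (continuousMultilinearCurryLeftEquiv ℝ (fun _ => E) F).toContinuousLinearEquiv g

variable [MeasurableSpace E] {μ : Measure E}

/-- The average of `f` over the random translates `x + s • Z`, where `Z` has law `μ`. For the
standard Gaussian law and `s = √(α t)` this is the heat semigroup `P_t`. -/
def scaledAverage (μ : Measure E) (s : ℝ) (f : E → F) (x : E) : F :=
  ∫ z, f (x + s • z) ∂μ

theorem norm_pow_mul_norm_scaledAverage_le [HasFiniteMoments μ]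
    (hf : ∀ y, (1 + ‖y‖) ^ k * ‖f y‖ ≤ C) (s : ℝ) (x : E) :
    ‖x‖ ^ k * ‖scaledAverage μ s f x‖ ≤ C * (1 + |s|) ^ k * ∫ z, (1 + ‖z‖) ^ k ∂μ := by
  rw [scaledAverage, ← norm_norm x, ← norm_pow, ← norm_smul, ← integral_smul,
    ← integral_const_mul]
  refine norm_integral_le_of_norm_le
    ((HasFiniteMoments.integrable_one_add_norm_pow k).const_mul _) (ae_of_all _ fun z => ?_)
  rw [norm_smul, norm_pow, norm_norm]
  exact norm_pow_mul_norm_comp_add_smul_le hf le_rfl x z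

variable [BorelSpace E] [SecondCountableTopology E]

theorem norm_pow_mul_norm_scaledAverage_sub_le [HasFiniteMoments μ]
    (hf : ∀ y, HasFDerivAt f (f' y) y) (hC : ∀ y, ‖f y‖ ≤ C)
    (hf' : ∀ y, (1 + ‖y‖) ^ k * ‖f' y‖ ≤ C') (hs : |s| ≤ S) (hr : |r| ≤ S) (x : E) :
    ‖x‖ ^ k * ‖scaledAverage μ s f x - scaledAverage μ r f x‖ ≤
      C' * (1 + S) ^ k * (∫ z, (1 + ‖z‖) ^ (k + 1) ∂μ) * |s - r| := by
  have hcont : Continuous f := continuous_iff_continuousAt.2 fun y => (hf y).continuousAt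
  rw [scaledAverage, scaledAverage,
    ← integral_sub (integrable_comp_add_smul hcont hC s x) (integrable_comp_add_smul hcont hC r x),
    ← norm_norm x, ← norm_pow, ← norm_smul, ← integral_smul, ← integral_const_mul,
    ← integral_mul_const]
  refine norm_integral_le_of_norm_le
    (((HasFiniteMoments.integrable_one_add_norm_pow (k + 1)).const_mul _).mul_const _)
    (ae_of_all _ fun z => ?_)
  rw [norm_smul, norm_pow, norm_norm]
  exact norm_pow_mul_norm_comp_add_smul_sub_le hf hf' hs hr x z

theorem hasFDerivAt_scaledAverage [IsFiniteMeasure μ] (hf : ∀ y, HasFDerivAt f (f' y) y)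
    (hf'c : Continuous f') (hC : ∀ y, ‖f y‖ ≤ C) (hC' : ∀ y, ‖f' y‖ ≤ C') (s : ℝ) (x : E) :
    HasFDerivAt (scaledAverage μ s f) (scaledAverage μ s f' x) x := by
  have hcont : Continuous f := continuous_iff_continuousAt.2 fun y => (hf y).continuousAt
  refine hasFDerivAt_integral_of_dominated_of_fderiv_le (s := univ) univ_mem
    (.of_forall fun y => (integrable_comp_add_smul hcont hC s y).aestronglyMeasurable)
    (integrable_comp_add_smul hcont hC s x)
    (integrable_comp_add_smul hf'c hC' s x).aestronglyMeasurable
    (ae_of_all _ fun z y _ => hC' (y + s • z)) (integrable_const C')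
    (ae_of_all _ fun z y _ => ?_)
  exact (hf (y + s • z)).comp y ((hasFDerivAt_id y).add_const (s • z))

theorem hasDerivAt_scaledAverage [HasFiniteMoments μ] (hf : ∀ y, HasFDerivAt f (f' y) y)
    (hf'c : Continuous f') (hC : ∀ y, ‖f y‖ ≤ C) (hC' : ∀ y, ‖f' y‖ ≤ C') (s : ℝ) (x : E) :
    HasDerivAt (fun u => scaledAverage μ u f x) (∫ z, f' (x + s • z) z ∂μ) s := by
  have hcont : Continuous f := continuous_iff_continuousAt.2 fun y => (hf y).continuousAt
  have hdom : Integrable (fun z : E => C' * ‖z‖) μ := by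
    simpa using (HasFiniteMoments.integrable_norm_pow (μ := μ) 1).const_mul C'
  have hmeas : Continuous fun z => f' (x + s • z) z :=
    (hf'c.comp (by fun_prop : Continuous fun z : E => x + s • z)).clm_apply continuous_id
  exact (hasDerivAt_integral_of_dominated_loc_of_deriv_le (s := univ) univ_mem
    (.of_forall fun u => (integrable_comp_add_smul hcont hC u x).aestronglyMeasurable)
    (integrable_comp_add_smul hcont hC s x) hmeas.aestronglyMeasurable
    (ae_of_all _ fun z u _ => (f' _).le_of_opNorm_le (hC' (x + u • z)) z) hdom
    (ae_of_all _ fun z u _ => hasDerivAt_comp_add_smul hf x z u)).2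

theorem hasFTaylorSeriesUpTo_scaledAverage [IsFiniteMeasure μ] (hf : ContDiff ℝ ∞ f)
    (hbound : ∀ n, ∃ C, ∀ y, ‖iteratedFDeriv ℝ n f y‖ ≤ C) (s : ℝ) :
    HasFTaylorSeriesUpTo ∞ (scaledAverage μ s f)
      fun x n => scaledAverage μ s (iteratedFDeriv ℝ n f) x := by
  have hcurry (n : ℕ) (x : E) : HasFDerivAt (scaledAverage μ s (iteratedFDeriv ℝ n f))
      (scaledAverage μ s (iteratedFDeriv ℝ (n + 1) f) x).curryLeft x := by
    obtain ⟨C, hC⟩ := hbound n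
    obtain ⟨C', hC'⟩ := hbound (n + 1)
    rw [scaledAverage, ← integral_curryLeft]
    have hcurry_norm (y : E) : ‖(iteratedFDeriv ℝ (n + 1) f y).curryLeft‖ ≤ C' := by
      simpa only [ContinuousMultilinearMap.curryLeft_norm] using hC' y
    have hcurry_cont : Continuous fun y => (iteratedFDeriv ℝ (n + 1) f y).curryLeft :=
      (continuousMultilinearCurryLeftEquiv ℝ (fun _ : Fin (n + 1) => E) F).continuous.comp
        (hf.continuous_iteratedFDeriv (mod_cast le_top))
    refine hasFDerivAt_scaledAverage (fun y => ?_) hcurry_cont hC hcurry_norm s x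
    exact hf.ftaylorSeries.fderiv n (mod_cast ENat.natCast_lt_top n) y
  refine ⟨fun x => ?_, fun n _ x => hcurry n x, fun n _ =>
    continuous_iff_continuousAt.2 fun x => (hcurry n x).continuousAt⟩
  obtain ⟨C, hC⟩ := hbound 0
  exact ContinuousMultilinearMap.integral_apply
    (integrable_comp_add_smul (hf.continuous_iteratedFDeriv (mod_cast le_top)) hC s x) 0

end ScaledAverage

section Schwartz

variable {E F : Type*} [NormedAddCommGroup E] [NormedSpace ℝ E] [NormedAddCommGroup F]
  [NormedSpace ℝ F]

theorem exists_forall_norm_iteratedFDeriv_le (φ : 𝓢(E, F)) (n : ℕ) :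
    ∃ C, ∀ x, ‖iteratedFDeriv ℝ n φ x‖ ≤ C :=
  ⟨_, SchwartzMap.norm_iteratedFDeriv_le_seminorm ℝ φ n⟩

theorem exists_forall_norm_le (φ : 𝓢(E, F)) : ∃ C, ∀ x, ‖φ x‖ ≤ C :=
  ⟨_, SchwartzMap.norm_le_seminorm ℝ φ⟩

variable [MeasurableSpace E] [BorelSpace E] [SecondCountableTopology E] {μ : Measure E}

theorem integrable_schwartz_comp_add_smul [IsFiniteMeasure μ] (φ : 𝓢(E, F)) (s : ℝ) (x : E) :
    Integrable (fun z => φ (x + s • z)) μ :=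
  have ⟨_, hC⟩ := exists_forall_norm_le φ
  integrable_comp_add_smul φ.continuous hC s x

theorem hasFTaylorSeriesUpTo_scaledAverage_schwartz [IsFiniteMeasure μ] (φ : 𝓢(E, F)) (s : ℝ) :
    HasFTaylorSeriesUpTo ∞ (scaledAverage μ s φ)
      fun x n => scaledAverage μ s (iteratedFDeriv ℝ n φ) x :=
  hasFTaylorSeriesUpTo_scaledAverage (φ.smooth ⊤) (exists_forall_norm_iteratedFDeriv_le φ) s

theorem iteratedFDeriv_scaledAverage [IsFiniteMeasure μ] (φ : 𝓢(E, F)) (s : ℝ) (n : ℕ) :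
    iteratedFDeriv ℝ n (scaledAverage μ s φ) = scaledAverage μ s (iteratedFDeriv ℝ n φ) :=
  funext fun x => ((hasFTaylorSeriesUpTo_scaledAverage_schwartz φ s).eq_iteratedFDeriv
    (mod_cast le_top) x).symm

/-- The averaging operator `φ ↦ scaledAverage μ s φ` on Schwartz functions. -/
def scaledAverageCLM (μ : Measure E) [HasFiniteMoments μ] (s : ℝ) : 𝓢(E, F) →L[ℝ] 𝓢(E, F) :=
  SchwartzMap.mkCLM (fun φ => scaledAverage μ s φ)
    (fun φ ψ x => integral_add (integrable_schwartz_comp_add_smul φ s x)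
      (integrable_schwartz_comp_add_smul ψ s x))
    (fun a φ x => integral_smul a fun z => φ (x + s • z))
    (fun φ => (hasFTaylorSeriesUpTo_scaledAverage_schwartz φ s).contDiff)
    (by
      rintro ⟨k, n⟩
      refine ⟨Finset.Iic (k, n), 2 ^ k * (1 + |s|) ^ k * ∫ z, (1 + ‖z‖) ^ k ∂μ, by positivity,
        fun φ x => ?_⟩
      have hφ (y : E) : (1 + ‖y‖) ^ k * ‖iteratedFDeriv ℝ n φ y‖ ≤
          2 ^ k * ((Finset.Iic (k, n)).sup (schwartzSeminormFamily ℝ E F)) φ :=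
        SchwartzMap.one_add_le_sup_seminorm_apply (m := (k, n)) le_rfl le_rfl φ y
      rw [iteratedFDeriv_scaledAverage]
      exact (norm_pow_mul_norm_scaledAverage_le hφ s x).trans_eq (by ring))

variable [HasFiniteMoments μ]

@[simp]
theorem scaledAverageCLM_apply (φ : 𝓢(E, F)) (s : ℝ) (x : E) :
    scaledAverageCLM μ s φ x = scaledAverage μ s φ x := rfl

theorem exists_seminorm_scaledAverageCLM_sub_le (φ : 𝓢(E, F)) (k n : ℕ) (S : ℝ) :
    ∃ C, ∀ s r : ℝ, |s| ≤ S → |r| ≤ S →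
      SchwartzMap.seminorm ℝ k n (scaledAverageCLM μ s φ - scaledAverageCLM μ r φ) ≤
        C * |s - r| := by
  obtain ⟨C, hC⟩ : ∃ C, ∀ y, (1 + ‖y‖) ^ k * ‖fderiv ℝ (iteratedFDeriv ℝ n φ) y‖ ≤ C := by
    simp_rw [norm_fderiv_iteratedFDeriv]
    exact ⟨_, SchwartzMap.one_add_le_sup_seminorm_apply (𝕜 := ℝ) (m := (k, n + 1)) le_rfl le_rfl φ⟩
  obtain ⟨C₀, hC₀⟩ := exists_forall_norm_iteratedFDeriv_le φ n
  have hC_nonneg : 0 ≤ C := le_trans (by positivity) (hC 0)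
  refine ⟨C * (1 + S) ^ k * ∫ z, (1 + ‖z‖) ^ (k + 1) ∂μ, fun s r hs hr => ?_⟩
  have hS : 0 ≤ S := (abs_nonneg s).trans hs
  refine SchwartzMap.seminorm_le_bound ℝ k n _ (by positivity) fun x => ?_
  have hsub : iteratedFDeriv ℝ n (⇑(scaledAverageCLM μ s φ - scaledAverageCLM μ r φ)) x =
      scaledAverage μ s (iteratedFDeriv ℝ n φ) x - scaledAverage μ r (iteratedFDeriv ℝ n φ) x := by
    rw [← iteratedFDeriv_scaledAverage, ← iteratedFDeriv_scaledAverage]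
    exact iteratedFDeriv_sub_apply ((scaledAverageCLM μ s φ).contDiffAt n)
      ((scaledAverageCLM μ r φ).contDiffAt n)
  have hdiff : Differentiable ℝ (iteratedFDeriv ℝ n φ) :=
    (φ.smooth ⊤).differentiable_iteratedFDeriv (mod_cast ENat.natCast_lt_top n)
  rw [hsub]
  exact norm_pow_mul_norm_scaledAverage_sub_le (fun y => (hdiff y).hasFDerivAt) hC₀ hC hs hr x

theorem continuous_scaledAverageCLM (φ : 𝓢(E, F)) :
    Continuous fun s => scaledAverageCLM μ s φ := by
  refine continuous_iff_continuousAt.2 fun r => ?_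
  refine ((schwartz_withSeminorms ℝ E F).tendsto_nhds _ _).2 fun ⟨k, n⟩ ε hε => ?_
  obtain ⟨C, hC⟩ := exists_seminorm_scaledAverageCLM_sub_le (μ := μ) φ k n (|r| + 1)
  have hlim : Tendsto (fun s : ℝ => C * |s - r|) (nhds r) (nhds 0) := by
    simpa using (by fun_prop : Continuous fun s : ℝ => C * |s - r|).tendsto r
  filter_upwards [hlim.eventually_lt_const hε, Metric.ball_mem_nhds r one_pos] with s hsε hsr
  rw [Metric.mem_ball, Real.dist_eq] at hsr
  refine (hC s r ?_ (by linarith)).trans_lt hsε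
  linarith [abs_sub_abs_le_abs_sub s r]

theorem continuous_scaledAverage (φ : 𝓢(E, F)) (x : E) :
    Continuous fun s => scaledAverage μ s φ x :=
  (BoundedContinuousFunction.lipschitz_eval_const x).continuous.comp
    ((SchwartzMap.toBoundedContinuousFunctionCLM ℝ E F).continuous.comp
      (continuous_scaledAverageCLM φ))

theorem lineDeriv_scaledAverageCLM (φ : 𝓢(E, F)) (s : ℝ) (v : E) :
    ∂_{v} (scaledAverageCLM μ s φ) = scaledAverageCLM μ s (∂_{v} φ) := by
  ext x
  obtain ⟨C, hC⟩ := exists_forall_norm_le φ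
  obtain ⟨C', hC'⟩ := exists_forall_norm_le (SchwartzMap.fderivCLM ℝ E F φ)
  have hderiv := hasFDerivAt_scaledAverage (μ := μ) φ.hasFDerivAt 
    (SchwartzMap.fderivCLM ℝ E F φ).continuous hC hC' s x
  rw [SchwartzMap.lineDerivOp_apply_eq_fderiv]
  refine (congrArg (fun L => L v) hderiv.fderiv).trans ?_
  exact ContinuousLinearMap.integral_apply
    (integrable_schwartz_comp_add_smul (SchwartzMap.fderivCLM ℝ E F φ) s x) v

theorem laplacian_scaledAverageCLM {E : Type*} [NormedAddCommGroup E] [InnerProductSpace ℝ E]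
    [FiniteDimensional ℝ E] [MeasurableSpace E] [BorelSpace E] {μ : Measure E}
    [HasFiniteMoments μ] (φ : 𝓢(E, F)) (s : ℝ) :
    Δ (scaledAverageCLM μ s φ) = scaledAverageCLM μ s (Δ φ) := by
  simp only [SchwartzMap.laplacian_eq_sum (stdOrthonormalBasis ℝ E), lineDeriv_scaledAverageCLM,
    map_sum]

end Schwartz

section StandardGaussian

variable {E F : Type*} [NormedAddCommGroup E] [InnerProductSpace ℝ E]

/-- The density of the standard Gaussian measure on `E` with respect to Lebesgue measure (for `E`
finite-dimensional). -/
def stdGaussianPDFReal (z : E) : ℝ :=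
  (2 * π) ^ (-(Module.finrank ℝ E : ℝ) / 2) * Real.exp (-‖z‖ ^ 2 / 2)

theorem stdGaussianPDFReal_nonneg (z : E) : 0 ≤ stdGaussianPDFReal z := by
  unfold stdGaussianPDFReal
  positivity

theorem hasFDerivAt_stdGaussianPDFReal (z : E) :
    HasFDerivAt stdGaussianPDFReal (-stdGaussianPDFReal z • innerSL ℝ z) z := by
  have hsq : HasFDerivAt (fun z : E => -‖z‖ ^ 2 / 2) (-innerSL ℝ z) z := by
    have h := (((hasStrictFDerivAt_norm_sq z).hasFDerivAt.fun_neg).mul_const (2 : ℝ)⁻¹)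
    simp only [← div_eq_mul_inv] at h
    convert! h using 1
    ext v
    simp
  convert! (hsq.exp.const_mul ((2 * π) ^ (-(Module.finrank ℝ E : ℝ) / 2))) using 1
  ext v
  simp [stdGaussianPDFReal, mul_assoc]

theorem continuous_stdGaussianPDFReal : Continuous (stdGaussianPDFReal (E := E)) :=
  continuous_iff_continuousAt.2 fun z => (hasFDerivAt_stdGaussianPDFReal z).continuousAt

theorem inv_abs_pow_mul_stdGaussianPDFReal_inv_smul {s : ℝ} (hs : 0 < s) (w : E) :
    |(s ^ Module.finrank ℝ E)⁻¹| * stdGaussianPDFReal (s⁻¹ • w) =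
      (2 * π * s ^ 2) ^ (-(Module.finrank ℝ E : ℝ) / 2) * Real.exp (-‖w‖ ^ 2 / (2 * s ^ 2)) := by
  have hpow : (s ^ 2) ^ (-(Module.finrank ℝ E : ℝ) / 2) = (s ^ Module.finrank ℝ E)⁻¹ := by
    rw [← Real.rpow_natCast s 2, ← Real.rpow_mul hs.le, ← Real.rpow_natCast s,
      ← Real.rpow_neg hs.le]
    congr 1
    push_cast
    ring
  have hexp : -‖s⁻¹ • w‖ ^ 2 / 2 = -‖w‖ ^ 2 / (2 * s ^ 2) := by
    rw [norm_smul, norm_inv, Real.norm_of_nonneg hs.le]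
    field_simp
  rw [stdGaussianPDFReal, hexp, abs_of_pos (by positivity),
    Real.mul_rpow (x := 2 * π) (by positivity) (by positivity), hpow]
  ring

variable [FiniteDimensional ℝ E] [MeasurableSpace E] [BorelSpace E]

instance hasFiniteMoments_stdGaussian : HasFiniteMoments (stdGaussian E) where
  integrable_norm_pow k := by
    rcases eq_or_ne k 0 with rfl | hk
    · simp
    · exact (IsGaussian.memLp_id (stdGaussian E) k
        (ENNReal.natCast_ne_top k)).integrable_norm_pow hk

theorem integrable_stdGaussianPDFReal : Integrable (stdGaussianPDFReal (E := E)) := by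
  have hexp : Integrable fun z : E => Real.exp (-(1 / 2) * ‖z‖ ^ 2) := by
    refine Integrable.of_integral_ne_zero ?_
    rw [GaussianFourier.integral_rexp_neg_mul_sq_norm one_half_pos]
    positivity
  convert! hexp.const_mul ((2 * π) ^ (-(Module.finrank ℝ E : ℝ) / 2)) using 3 with z
  unfold stdGaussianPDFReal
  congr 2
  ring

theorem stdGaussian_eq_withDensity :
    stdGaussian E = volume.withDensity fun z => ENNReal.ofReal (stdGaussianPDFReal z) := by
  have := isFiniteMeasure_withDensity_ofReal (integrable_stdGaussianPDFReal (E := E)).2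
  refine Measure.ext_of_charFun (funext fun w => ?_)
  rw [charFun_stdGaussian, charFun_apply, integral_withDensity_eq_integral_toReal_smul
    continuous_stdGaussianPDFReal.measurable.ennreal_ofReal (by simp)]
  have hintegrand (z : E) : (ENNReal.ofReal (stdGaussianPDFReal z)).toReal •
      Complex.exp (inner ℝ z w * Complex.I) =
        ((2 * π) ^ (-(Module.finrank ℝ E : ℝ) / 2) : ℝ) *
          Complex.exp (-(1 / 2) * ‖z‖ ^ 2 + Complex.I * inner ℝ w z) := by
    rw [ENNReal.toReal_ofReal (stdGaussianPDFReal_nonneg z), stdGaussianPDFReal, Complex.real_smul,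
      Complex.ofReal_mul, Complex.ofReal_exp, mul_assoc, ← Complex.exp_add, real_inner_comm]
    push_cast
    ring_nf
  have hconst : (((2 * π) ^ (-(Module.finrank ℝ E : ℝ) / 2) : ℝ) : ℂ) *
      (π / (1 / 2)) ^ (Module.finrank ℝ E / 2 : ℂ) = 1 := by
    have hbase : (π / (1 / 2) : ℂ) = ((2 * π : ℝ) : ℂ) := by
      push_cast
      ring
    have hexponent : (Module.finrank ℝ E / 2 : ℂ) = ((Module.finrank ℝ E / 2 : ℝ) : ℂ) := by
      push_cast
      rfl
    rw [hbase, hexponent, ← Complex.ofReal_cpow (by positivity), ← Complex.ofReal_mul,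
      ← Real.rpow_add (by positivity), neg_div, neg_add_cancel, Real.rpow_zero, Complex.ofReal_one]
  simp_rw [hintegrand]
  rw [integral_const_mul, GaussianFourier.integral_cexp_neg_mul_sq_norm_add (by simp), ← mul_assoc,
    hconst, one_mul]
  congr 1
  rw [Complex.I_sq]
  ring

variable [NormedAddCommGroup F] [NormedSpace ℝ F]

theorem integral_stdGaussian_eq (f : E → F) :
    ∫ z, f z ∂stdGaussian E = ∫ z, stdGaussianPDFReal z • f z := by
  rw [stdGaussian_eq_withDensity, integral_withDensity_eq_integral_toReal_smul
    continuous_stdGaussianPDFReal.measurable.ennreal_ofReal (by simp)]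
  simp only [ENNReal.toReal_ofReal (stdGaussianPDFReal_nonneg _)]

theorem integrable_stdGaussian_iff {f : E → F} :
    Integrable f (stdGaussian E) ↔ Integrable fun z => stdGaussianPDFReal z • f z := by
  rw [stdGaussian_eq_withDensity, integrable_withDensity_iff_integrable_smul'
    continuous_stdGaussianPDFReal.measurable.ennreal_ofReal (by simp)]
  simp only [ENNReal.toReal_ofReal (stdGaussianPDFReal_nonneg _)]

theorem integral_inner_smul_stdGaussian_eq {f : E → F} {f' : E → E →L[ℝ] F} {v : E}
    (hf : ∀ z, HasFDerivAt f (f' z) z) (hint : Integrable f (stdGaussian E))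
    (hint_inner : Integrable (fun z => inner ℝ z v • f z) (stdGaussian E))
    (hint_deriv : Integrable (fun z => f' z v) (stdGaussian E)) :
    ∫ z, inner ℝ z v • f z ∂stdGaussian E = ∫ z, f' z v ∂stdGaussian E := by
  rw [integrable_stdGaussian_iff] at hint hint_inner hint_deriv
  rw [integral_stdGaussian_eq, integral_stdGaussian_eq]
  have hpdf' (z : E) : (-stdGaussianPDFReal z • innerSL ℝ z) v • f z =
      -(stdGaussianPDFReal z • inner ℝ z v • f z) := by
    simp [smul_smul]
  have hparts := integral_bilinear_hasFDerivAt_right_eq_neg_left_of_integrable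
    (μ := volume) (B := ContinuousLinearMap.lsmul ℝ ℝ) (v := v)
    (f := stdGaussianPDFReal) (f' := fun z => -stdGaussianPDFReal z • innerSL ℝ z) (g := f)
    (g' := f') (hint_inner.neg.congr (.of_forall fun z => (hpdf' z).symm))
    hint_deriv hint (fun z _ => hasFDerivAt_stdGaussianPDFReal z) fun z _ => hf z
  simp only [ContinuousLinearMap.lsmul_apply, hpdf', integral_neg, neg_neg] at hparts
  exact hparts.symm

theorem scaledAverage_stdGaussian_eq_integral {s : ℝ} (hs : 0 < s) (f : E → F) (x : E) :
    scaledAverage (stdGaussian E) s f x =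
      ∫ y, ((2 * π * s ^ 2) ^ (-(Module.finrank ℝ E : ℝ) / 2) *
        Real.exp (-‖x - y‖ ^ 2 / (2 * s ^ 2))) • f y :=
  calc scaledAverage (stdGaussian E) s f x
      = ∫ z, stdGaussianPDFReal (s⁻¹ • s • z) • f (x + s • z) := by
        simp only [inv_smul_smul₀ hs.ne', scaledAverage, integral_stdGaussian_eq]
    _ = |(s ^ Module.finrank ℝ E)⁻¹| • ∫ w, stdGaussianPDFReal (s⁻¹ • w) • f (x + w) :=
        Measure.integral_comp_smul volume (fun w => stdGaussianPDFReal (s⁻¹ • w) • f (x + w)) s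
    _ = ∫ w, ((2 * π * s ^ 2) ^ (-(Module.finrank ℝ E : ℝ) / 2) *
          Real.exp (-‖x - (x + w)‖ ^ 2 / (2 * s ^ 2))) • f (x + w) := by
        simp only [← integral_smul, smul_smul, inv_abs_pow_mul_stdGaussianPDFReal_inv_smul hs,
          sub_add_cancel_left, norm_neg]
    _ = _ := integral_add_left_eq_self (μ := volume)
        (fun y => ((2 * π * s ^ 2) ^ (-(Module.finrank ℝ E : ℝ) / 2) *
          Real.exp (-‖x - y‖ ^ 2 / (2 * s ^ 2))) • f y) x

theorem integrable_inner_smul_schwartz_comp_add_smul {μ : Measure E} [HasFiniteMoments μ]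
    (ψ : 𝓢(E, F)) (s : ℝ) (x v : E) :
    Integrable (fun z => inner ℝ z v • ψ (x + s • z)) μ := by
  have hinner : Integrable (fun z => inner ℝ z v) μ := by
    have hnorm : Integrable (fun z : E => ‖z‖ * ‖v‖) μ := by
      simpa using (HasFiniteMoments.integrable_norm_pow (μ := μ) 1).mul_const ‖v‖
    exact hnorm.mono' (by fun_prop) (ae_of_all _ fun z => norm_inner_le_norm z v)
  obtain ⟨C, hC⟩ := exists_forall_norm_le ψ
  exact hinner.smul_bdd C (ψ.continuous.comp (by fun_prop)).aestronglyMeasurable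
    (ae_of_all _ fun z => hC (x + s • z))

theorem integral_inner_smul_schwartz_comp_stdGaussian (ψ : 𝓢(E, F)) (s : ℝ) (x v : E) :
    ∫ z, inner ℝ z v • ψ (x + s • z) ∂stdGaussian E =
      s • scaledAverageCLM (stdGaussian E) s (∂_{v} ψ) x := by
  have hψ (z : E) : HasFDerivAt (fun z => ψ (x + s • z)) (s • fderiv ℝ ψ (x + s • z)) z := by
    have hdil : HasFDerivAt (fun z : E => x + s • z) (s • ContinuousLinearMap.id ℝ E) z :=
      ((hasFDerivAt_id z).const_smul s).const_add x
    simpa [Function.comp_def] using (ψ.hasFDerivAt (x + s • z)).comp z hdil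
  rw [scaledAverageCLM_apply, scaledAverage, ← integral_smul]
  exact integral_inner_smul_stdGaussian_eq hψ (integrable_schwartz_comp_add_smul ψ s x)
    (integrable_inner_smul_schwartz_comp_add_smul ψ s x v)
    ((integrable_schwartz_comp_add_smul (∂_{v} ψ) s x).smul s)

theorem hasDerivAt_scaledAverage_stdGaussian (φ : 𝓢(E, F)) (s : ℝ) (x : E) :
    HasDerivAt (fun u => scaledAverage (stdGaussian E) u φ x)
      (s • scaledAverageCLM (stdGaussian E) s (Δ φ) x) s := by
  let b := stdOrthonormalBasis ℝ E
  have hexpand (z : E) : fderiv ℝ φ (x + s • z) z =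
      ∑ i, inner ℝ z (b i) • (∂_{b i} φ) (x + s • z) :=
    calc fderiv ℝ φ (x + s • z) z
        = fderiv ℝ φ (x + s • z) (∑ i, inner ℝ (b i) z • b i) := by rw [b.sum_repr' z]
      _ = _ := by
        simp only [map_sum, map_smul, SchwartzMap.lineDerivOp_apply_eq_fderiv, real_inner_comm]
  obtain ⟨C, hC⟩ := exists_forall_norm_le φ
  obtain ⟨C', hC'⟩ := exists_forall_norm_le (SchwartzMap.fderivCLM ℝ E F φ)
  convert! hasDerivAt_scaledAverage (μ := stdGaussian E) φ.hasFDerivAt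
    (SchwartzMap.fderivCLM ℝ E F φ).continuous hC hC' s x using 1
  calc s • scaledAverageCLM (stdGaussian E) s (Δ φ) x
      = s • ∑ i, scaledAverageCLM (stdGaussian E) s (∂_{b i} (∂_{b i} φ)) x := by
        rw [SchwartzMap.laplacian_eq_sum b, map_sum, sum_apply]
    _ = ∑ i, ∫ z, inner ℝ z (b i) • (∂_{b i} φ) (x + s • z) ∂stdGaussian E := by
        simp only [Finset.smul_sum, integral_inner_smul_schwartz_comp_stdGaussian]
    _ = ∫ z, fderiv ℝ φ (x + s • z) z ∂stdGaussian E := by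
        simp only [hexpand]
        exact (integral_finsetSum _ fun i _ =>
          integrable_inner_smul_schwartz_comp_add_smul (∂_{b i} φ) s x (b i)).symm

end StandardGaussian

section HeatSemigroup

theorem hasDerivWithinAt_comp_sqrt {F : Type*} [NormedAddCommGroup F] [NormedSpace ℝ F]
    {f g : ℝ → F} (hf : ∀ s, HasDerivAt f (s • g s) s) (hg : Continuous g) {t : ℝ} (ht : 0 ≤ t) :
    HasDerivWithinAt (fun t => f √t) ((1 / 2 : ℝ) • g √t) (Ici 0) t := by
  have hpos : ∀ u ∈ Ioi (0 : ℝ), HasDerivAt (fun t => f √t) ((1 / 2 : ℝ) • g √u) u := by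
    intro u hu
    have hsqrt : 0 < √u := Real.sqrt_pos.2 hu
    convert! (hf √u).scomp u (Real.hasDerivAt_sqrt (ne_of_gt hu)) using 1
    rw [smul_smul]
    congr 1
    field_simp
  rcases ht.eq_or_lt with rfl | ht
  · have hcont : Continuous f := continuous_iff_continuousAt.2 fun s => (hf s).continuousAt
    have hlim : Continuous fun t => (1 / 2 : ℝ) • g √t := by fun_prop
    refine hasDerivWithinAt_Ici_of_tendsto_deriv (s := Ioi 0)
      (fun u hu => (hpos u hu).differentiableAt.differentiableWithinAt)
      (hcont.comp continuous_sqrt).continuousWithinAt self_mem_nhdsWithin ?_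
    refine ((hlim.tendsto 0).mono_left nhdsWithin_le_nhds).congr' ?_
    filter_upwards [self_mem_nhdsWithin] with u hu using (hpos u hu).deriv.symm
  · exact (hpos t ht).hasDerivWithinAt

variable {d : ℕ} {α t : ℝ}

theorem heatP_eq_scaledAverage (hα : 0 < α) (ht : 0 ≤ t) (f : Euc d → ℝ) :
    heatP d α t f = scaledAverage (stdGaussian (Euc d)) √(α * t) f := by
  funext x
  rcases ht.eq_or_lt with rfl | ht
  · simp [heatP, scaledAverage]
  · have hαt : 0 < α * t := mul_pos hα ht
    rw [heatP, if_neg ht.ne', scaledAverage_stdGaussian_eq_integral (Real.sqrt_pos.2 hαt),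
      Real.sq_sqrt hαt.le, finrank_euclideanSpace_fin]
    simp only [mul_assoc, smul_eq_mul]

theorem lap_eq_laplacian (φ : 𝓢(Euc d, ℝ)) : lap d φ = Δ φ := by
  ext x
  rw [SchwartzMap.laplacian_eq_sum (EuclideanSpace.basisFun (Fin d) ℝ), sum_apply]
  simp only [SchwartzMap.lineDerivOp_apply_eq_fderiv, EuclideanSpace.basisFun_apply]
  rfl

theorem lap_heatP_s2 (hα : 0 < α) (ht : 0 ≤ t) (φ : 𝓢(Euc d, ℝ)) :
    lap d (heatP d α t φ) = heatP d α t (Δ φ : 𝓢(Euc d, ℝ)) := by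
  rw [heatP_eq_scaledAverage hα ht, heatP_eq_scaledAverage hα ht]
  exact (lap_eq_laplacian (scaledAverageCLM (stdGaussian (Euc d)) √(α * t) φ)).trans
    (congrArg DFunLike.coe (laplacian_scaledAverageCLM φ √(α * t)))

theorem hasDerivWithinAt_heatP (hα : 0 < α) (ht : 0 ≤ t) (φ : 𝓢(Euc d, ℝ)) (x : Euc d) :
    HasDerivWithinAt (fun u => heatP d α u φ x) (α / 2 * heatP d α t (Δ φ : 𝓢(Euc d, ℝ)) x)
      (Ici 0) t := by
  have hsqrt := hasDerivWithinAt_comp_sqrt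
    (fun s => hasDerivAt_scaledAverage_stdGaussian φ s x)
    (continuous_scaledAverage (μ := stdGaussian (Euc d)) (Δ φ) x) (mul_nonneg hα.le ht)
  have hlin : HasDerivWithinAt (fun u => α * u) α (Ici 0) t := by
    simpa using ((hasDerivAt_id t).const_mul α).hasDerivWithinAt
  have hcomp := hsqrt.scomp t hlin fun u hu => mul_nonneg hα.le hu
  rw [smul_smul, mul_one_div, smul_eq_mul] at hcomp
  rw [heatP_eq_scaledAverage hα ht]
  exact hcomp.congr (fun u hu => congrFun (heatP_eq_scaledAverage hα hu φ) x)
    (congrFun (heatP_eq_scaledAverage hα ht φ) x)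

end HeatSemigroup

/-- for a Schwartz function `φ`, `P_t φ` is Schwartz for every `t ≥ 0`,
the map `t ↦ P_t φ` is continuous from `[0,∞)` into the Schwartz space, `t ↦ P_t φ(x)` is
differentiable with `∂_t P_t φ = (α/2) Δ P_t φ`, and `t ↦ ∂_t P_t φ` is continuous into
the Schwartz space as well. -/
theorem statement2 (d : ℕ) (hd : 1 ≤ d) (α : ℝ) (hα : 0 < α)
    (φ : SchwartzMap (Euc d) ℝ) :
    ∃ F G : ℝ → SchwartzMap (Euc d) ℝ,
      (∀ t ≥ (0 : ℝ), ∀ x, F t x = heatP d α t (fun y => φ y) x) ∧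
      ContinuousOn F (Set.Ici 0) ∧
      (∀ t ≥ (0 : ℝ), ∀ x,
        HasDerivWithinAt (fun s => heatP d α s (fun y => φ y) x)
          (α / 2 * lap d (heatP d α t (fun y => φ y)) x) (Set.Ici 0) t ∧
        G t x = α / 2 * lap d (heatP d α t (fun y => φ y)) x) ∧
      ContinuousOn G (Set.Ici 0) := by
  have hF (ψ : 𝓢(Euc d, ℝ)) :
      Continuous fun t : ℝ => scaledAverageCLM (stdGaussian (Euc d)) √(α * t) ψ :=
    (continuous_scaledAverageCLM ψ).comp (by fun_prop)
  refine ⟨fun t => scaledAverageCLM (stdGaussian (Euc d)) √(α * t) φ,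
    fun t => (α / 2) • scaledAverageCLM (stdGaussian (Euc d)) √(α * t) (Δ φ),
    fun t ht x => ?_, (hF φ).continuousOn, fun t ht x => ?_,
    ((hF (Δ φ)).const_smul (α / 2)).continuousOn⟩
  · rw [heatP_eq_scaledAverage hα ht, scaledAverageCLM_apply]
  · rw [lap_heatP_s2 hα ht]
    refine ⟨hasDerivWithinAt_heatP hα ht φ x, ?_⟩
    rw [heatP_eq_scaledAverage hα ht, smul_apply, scaledAverageCLM_apply, smul_eq_mul]
end
end

section
/- Let μ be a tempered measure on ℝ^d, let ψ be a Schwartz function on ℝ^d, and let T > 0. Then sup_{t ∈ [0,T]} ∫_{ℝ^d} |(P_t ψ)(x)| μ(dx) < ∞. -/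
open MeasureTheory Real Filter Set

noncomputable section

/-! All the functions `P_t ψ`, `t ∈ [0, T]`, lie below one Schwartz function `Φ`, so the supremum is
at most `∫ Φ dμ < ∞`. Indeed `P_t ψ x = ∫ γ(z) ψ(x - √(αt) z) dz` with `γ` the standard Gaussian
density, and `1 + ‖x‖ ≤ (1 + ‖x - √(αt) z‖) (1 + √(αt)) (1 + ‖z‖)`, so that
`(1 + ‖x‖) ^ k |P_t ψ x|` is bounded uniformly in `x` and in `t ∈ [0, T]` for every `k`. Bounds
`(1 + ‖x‖) ^ k |f x| ≤ C k` say that `|f x| ≤ H (1 + ‖x‖)`, where `H r = inf_k C k / r ^ k` is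
nonincreasing; convolving `H ∘ ‖·‖` with a bump function supported in the unit ball gives a smooth
majorant, whose derivatives decay rapidly because they fall on the bump function. -/

section RapidDecay

variable {E F : Type*} [NormedAddCommGroup E] [NormedAddCommGroup F]

lemma one_add_norm_pow_le_mul (k : ℕ) (x v : E) :
    (1 + ‖x‖) ^ k ≤ (1 + ‖x - v‖) ^ k * (1 + ‖v‖) ^ k := by
  rw [← mul_pow]
  gcongr
  nlinarith [norm_le_norm_sub_add x v, mul_nonneg (norm_nonneg (x - v)) (norm_nonneg v)]

lemma one_add_norm_pow_mul_norm_integral_le [NormedSpace ℝ F] {Ω : Type*} [MeasurableSpace Ω]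
    {ν : Measure Ω} {φ w : Ω → ℝ} {u : Ω → E} {g : E → F} {k : ℕ} {A : ℝ}
    (hg : ∀ x, (1 + ‖x‖) ^ k * ‖g x‖ ≤ A) (hw : Integrable w ν)
    (hφw : ∀ ω, (1 + ‖u ω‖) ^ k * ‖φ ω‖ ≤ w ω) (x : E) :
    (1 + ‖x‖) ^ k * ‖∫ ω, φ ω • g (x - u ω) ∂ν‖ ≤ A * ∫ ω, w ω ∂ν := by
  have hA : 0 ≤ A := le_trans (by positivity) (hg 0)
  have pointwise (ω : Ω) : ‖((1 + ‖x‖) ^ k) • φ ω • g (x - u ω)‖ ≤ A * w ω := by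
    rw [norm_smul, norm_smul, Real.norm_of_nonneg (by positivity)]
    calc (1 + ‖x‖) ^ k * (‖φ ω‖ * ‖g (x - u ω)‖)
        ≤ ((1 + ‖x - u ω‖) ^ k * (1 + ‖u ω‖) ^ k) * (‖φ ω‖ * ‖g (x - u ω)‖) := by
          gcongr
          exact one_add_norm_pow_le_mul k x (u ω)
      _ = ((1 + ‖x - u ω‖) ^ k * ‖g (x - u ω)‖) * ((1 + ‖u ω‖) ^ k * ‖φ ω‖) := by ring
      _ ≤ A * w ω := by
          gcongr
          exacts [hg _, hφw ω]
  calc (1 + ‖x‖) ^ k * ‖∫ ω, φ ω • g (x - u ω) ∂ν‖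
      = ‖∫ ω, ((1 + ‖x‖) ^ k) • φ ω • g (x - u ω) ∂ν‖ := by
        rw [integral_smul, norm_smul, Real.norm_of_nonneg (by positivity)]
    _ ≤ ∫ ω, A * w ω ∂ν := norm_integral_le_of_norm_le (hw.const_mul A) (.of_forall pointwise)
    _ = A * ∫ ω, w ω ∂ν := integral_const_mul A w

/-- A Borel function that decays faster than every power of `1 + ‖x‖`. Unlike for Schwartz
functions, nothing is asked of derivatives, so envelopes and densities qualify. -/
structure RapidlyDecreasing [MeasurableSpace E] (f : E → F) : Prop where
  stronglyMeasurable : StronglyMeasurable f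
  exists_bound : ∀ k : ℕ, ∃ C : ℝ, ∀ x, (1 + ‖x‖) ^ k * ‖f x‖ ≤ C

lemma RapidlyDecreasing.integrable_one_add_norm_pow_mul [MeasurableSpace E] [BorelSpace E]
    {f : E → F} (hf : RapidlyDecreasing f) (μ : Measure E) [μ.HasTemperateGrowth] (k : ℕ) :
    Integrable (fun x => (1 + ‖x‖) ^ k * ‖f x‖) μ := by
  obtain ⟨C, hC⟩ := hf.exists_bound (k + μ.integrablePower)
  refine ((Measure.integrable_pow_neg_integrablePower μ).const_mul C).mono' ?_
    (.of_forall fun x => ?_)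
  · exact (by fun_prop : Measurable fun x : E => (1 + ‖x‖) ^ k).aestronglyMeasurable.mul
      hf.stronglyMeasurable.norm.aestronglyMeasurable
  · rw [Real.norm_of_nonneg (by positivity), Real.rpow_neg (by positivity), Real.rpow_natCast,
      ← div_eq_mul_inv, le_div_iff₀ (by positivity)]
    calc (1 + ‖x‖) ^ k * ‖f x‖ * (1 + ‖x‖) ^ μ.integrablePower
        = (1 + ‖x‖) ^ (k + μ.integrablePower) * ‖f x‖ := by ring
      _ ≤ C := hC x

lemma RapidlyDecreasing.integrable [MeasurableSpace E] [BorelSpace E] {f : E → F}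
    (hf : RapidlyDecreasing f) (μ : Measure E) [μ.HasTemperateGrowth] : Integrable f μ := by
  rw [← integrable_norm_iff hf.stronglyMeasurable.aestronglyMeasurable]
  simpa using hf.integrable_one_add_norm_pow_mul μ 0

lemma exists_forall_one_add_norm_pow_mul_norm_iteratedFDeriv_le [NormedSpace ℝ E] [NormedSpace ℝ F]
    (f : SchwartzMap E F) (k n : ℕ) :
    ∃ C : ℝ, ∀ x, (1 + ‖x‖) ^ k * ‖iteratedFDeriv ℝ n f x‖ ≤ C :=
  ⟨_, SchwartzMap.one_add_le_sup_seminorm_apply (𝕜 := ℝ) (m := (k, n)) le_rfl le_rfl f⟩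

lemma rapidlyDecreasing_schwartzMap [NormedSpace ℝ E] [NormedSpace ℝ F] [MeasurableSpace E]
    [BorelSpace E] [SecondCountableTopology E] (f : SchwartzMap E F) : RapidlyDecreasing f where
  stronglyMeasurable := f.continuous.stronglyMeasurable
  exists_bound k := by
    simpa using exists_forall_one_add_norm_pow_mul_norm_iteratedFDeriv_le f k 0

end RapidDecay

section Convolution

variable {E F : Type*} [NormedAddCommGroup E] [NormedSpace ℝ E] [MeasurableSpace E] [BorelSpace E]
  [NormedAddCommGroup F] [NormedSpace ℝ F] {μ : Measure E}

lemma iteratedFDeriv_convolution_lsmul [SFinite μ] [μ.IsAddLeftInvariant] {h : E → ℝ}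
    (hh : LocallyIntegrable h μ) {g : E → F} (hgc : HasCompactSupport g)
    (hg : ContDiff ℝ (⊤ : ℕ∞) g) (n : ℕ) :
    iteratedFDeriv ℝ n (convolution h g (ContinuousLinearMap.lsmul ℝ ℝ) μ) =
      convolution h (iteratedFDeriv ℝ n g) (ContinuousLinearMap.lsmul ℝ ℝ) μ := by
  induction n with
  | zero =>
    ext1 x
    simp only [iteratedFDeriv_zero_eq_comp, Function.comp_apply, convolution_def,
      ContinuousLinearMap.lsmul_apply, ← map_smul]
    exact (ContinuousLinearEquiv.integral_comp_comm
      (continuousMultilinearCurryFin0 ℝ E F).symm.toContinuousLinearEquiv _).symm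
  | succ n ih =>
    have hfderiv (x : E) : fderiv ℝ
        (convolution h (iteratedFDeriv ℝ n g) (ContinuousLinearMap.lsmul ℝ ℝ) μ) x =
          ∫ y, h y • fderiv ℝ (iteratedFDeriv ℝ n g) (x - y) ∂μ :=
      ((hgc.iteratedFDeriv n).hasFDerivAt_convolution_right _ hh
        (hg.iteratedFDeriv_right (mod_cast le_top)) x).fderiv
    ext1 x
    simp only [iteratedFDeriv_succ_eq_comp_left, ih, Function.comp_apply, hfderiv, convolution_def,
      ContinuousLinearMap.lsmul_apply, ← map_smul]
    exact (ContinuousLinearEquiv.integral_comp_comm (𝕜 := ℝ) (X := E)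
      (E := E →L[ℝ] E [×n]→L[ℝ] F) (F := E [×n + 1]→L[ℝ] F) (continuousMultilinearCurryLeftEquiv ℝ
        (fun _ : Fin (n + 1) => E) F).symm.toContinuousLinearEquiv _).symm

/-- The convolution of a rapidly decreasing function with a test function, as a Schwartz
function. -/
def RapidlyDecreasing.convolutionSchwartz [FiniteDimensional ℝ E] {h : E → ℝ}
    (hh : RapidlyDecreasing h) (μ : Measure E) [μ.IsAddHaarMeasure] {g : E → F}
    (hgc : HasCompactSupport g) (hg : ContDiff ℝ (⊤ : ℕ∞) g) : SchwartzMap E F where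
  toFun := convolution h g (ContinuousLinearMap.lsmul ℝ ℝ) μ
  smooth' := hgc.contDiff_convolution_right _ (hh.integrable μ).locallyIntegrable hg
  decay' k n := by
    obtain ⟨A, hA⟩ :=
      exists_forall_one_add_norm_pow_mul_norm_iteratedFDeriv_le (hgc.toSchwartzMap hg) k n
    refine ⟨A * ∫ y, (1 + ‖y‖) ^ k * ‖h y‖ ∂μ, fun x => ?_⟩
    rw [iteratedFDeriv_convolution_lsmul (hh.integrable μ).locallyIntegrable hgc hg]
    calc ‖x‖ ^ k * ‖∫ y, h y • iteratedFDeriv ℝ n g (x - y) ∂μ‖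
        ≤ (1 + ‖x‖) ^ k * ‖∫ y, h y • iteratedFDeriv ℝ n g (x - y) ∂μ‖ := by
          gcongr
          exact le_add_of_nonneg_left zero_le_one
      _ ≤ A * ∫ y, (1 + ‖y‖) ^ k * ‖h y‖ ∂μ :=
          one_add_norm_pow_mul_norm_integral_le hA (hh.integrable_one_add_norm_pow_mul μ k)
            (fun _ => le_rfl) x

lemma le_convolution_normed [FiniteDimensional ℝ E] [μ.IsAddHaarMeasure] {h : E → ℝ}
    (hh : LocallyIntegrable h μ) (φ : ContDiffBump (0 : E)) {x : E} {a : ℝ}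
    (ha : ∀ y ∈ Metric.ball x φ.rOut, a ≤ h y) :
    a ≤ convolution h (φ.normed μ) (ContinuousLinearMap.lsmul ℝ ℝ) μ x := by
  calc a = ∫ y, a * φ.normed μ (x - y) ∂μ := by
        rw [integral_const_mul, integral_sub_left_eq_self (φ.normed μ) μ x, φ.integral_normed,
          mul_one]
    _ ≤ ∫ y, h y * φ.normed μ (x - y) ∂μ := by
        refine integral_mono ((φ.integrable_normed.comp_sub_left x).const_mul a)
          (φ.hasCompactSupport_normed.convolutionExists_right (ContinuousLinearMap.lsmul ℝ ℝ) hh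
            φ.continuous_normed x) fun y => ?_
        by_cases hy : y ∈ Metric.ball x φ.rOut
        · exact mul_le_mul_of_nonneg_right (ha y hy) (φ.nonneg_normed _)
        · have hzero : φ.normed μ (x - y) = 0 := by
            rw [← Function.notMem_support, φ.support_normed_eq, mem_ball_zero_iff]
            rwa [mem_ball_iff_norm'] at hy
          simp only [hzero, mul_zero, le_refl]

end Convolution

section Envelope

/-- The largest function of `r ≥ 1` compatible with all the bounds `r ^ k * a ≤ C k`. Below `r = 1`
it is extended by a constant, which keeps it nonincreasing on the whole line. -/
def decayEnvelope (C : ℕ → ℝ) (r : ℝ) : ℝ := ⨅ k, C k / max 1 r ^ k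

variable {C : ℕ → ℝ}

lemma decayEnvelope_nonneg (hC : ∀ k, 0 ≤ C k) (r : ℝ) : 0 ≤ decayEnvelope C r :=
  Real.iInf_nonneg fun k => div_nonneg (hC k) (by positivity)

lemma bddBelow_range_div_max_one_pow (hC : ∀ k, 0 ≤ C k) (r : ℝ) :
    BddBelow (range fun k => C k / max 1 r ^ k) :=
  ⟨0, forall_mem_range.2 fun k => div_nonneg (hC k) (by positivity)⟩

lemma antitone_decayEnvelope (hC : ∀ k, 0 ≤ C k) : Antitone (decayEnvelope C) := fun r s hrs =>
  ciInf_mono (bddBelow_range_div_max_one_pow hC s) fun k => by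
    have := hC k
    gcongr

lemma le_decayEnvelope {r a : ℝ} (hr : 1 ≤ r) (ha : ∀ k, r ^ k * a ≤ C k) :
    a ≤ decayEnvelope C r :=
  le_ciInf fun k => by
    rw [max_eq_right hr, le_div_iff₀ (by positivity), mul_comm]
    exact ha k

lemma max_one_pow_mul_decayEnvelope_le (hC : ∀ k, 0 ≤ C k) (r : ℝ) (k : ℕ) :
    max 1 r ^ k * decayEnvelope C r ≤ C k := by
  rw [mul_comm, ← le_div_iff₀ (by positivity)]
  exact ciInf_le (bddBelow_range_div_max_one_pow hC r) k

lemma rapidlyDecreasing_decayEnvelope_norm {E : Type*} [NormedAddCommGroup E] [MeasurableSpace E]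
    [BorelSpace E] (hC : ∀ k, 0 ≤ C k) : RapidlyDecreasing fun x : E => decayEnvelope C ‖x‖ where
  stronglyMeasurable :=
    ((antitone_decayEnvelope hC).measurable.comp measurable_norm).stronglyMeasurable
  exists_bound k := by
    refine ⟨2 ^ k * C k, fun x => ?_⟩
    rw [Real.norm_of_nonneg (decayEnvelope_nonneg hC _)]
    calc (1 + ‖x‖) ^ k * decayEnvelope C ‖x‖
        ≤ (2 * max 1 ‖x‖) ^ k * decayEnvelope C ‖x‖ := by
          gcongr
          · exact decayEnvelope_nonneg hC _
          · linarith [le_max_left 1 ‖x‖, le_max_right 1 ‖x‖]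
      _ = 2 ^ k * (max 1 ‖x‖ ^ k * decayEnvelope C ‖x‖) := by ring
      _ ≤ 2 ^ k * C k := by
          gcongr
          exact max_one_pow_mul_decayEnvelope_le hC _ k

theorem exists_schwartzMap_forall_norm_le {ι E F : Type*} [NormedAddCommGroup E] [NormedSpace ℝ E]
    [FiniteDimensional ℝ E] [NormedAddCommGroup F] {f : ι → E → F}
    (hf : ∀ k : ℕ, ∃ C : ℝ, ∀ i x, (1 + ‖x‖) ^ k * ‖f i x‖ ≤ C) :
    ∃ Φ : SchwartzMap E ℝ, ∀ i x, ‖f i x‖ ≤ Φ x := by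
  borelize E
  choose C hC using hf
  have hnonneg (k : ℕ) : 0 ≤ |C k| := abs_nonneg (C k)
  let φ : ContDiffBump (0 : E) := ⟨1 / 2, 1, by norm_num, by norm_num⟩
  have hh := rapidlyDecreasing_decayEnvelope_norm (E := E) hnonneg
  refine ⟨hh.convolutionSchwartz Measure.addHaar φ.hasCompactSupport_normed φ.contDiff_normed,
    fun i x => le_convolution_normed (hh.integrable _).locallyIntegrable φ fun y hy => ?_⟩
  have hyx : ‖y‖ ≤ 1 + ‖x‖ := by
    linarith [norm_le_norm_sub_add y x, mem_ball_iff_norm.1 hy, show φ.rOut = 1 from rfl]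
  calc ‖f i x‖ ≤ decayEnvelope (fun k => |C k|) (1 + ‖x‖) :=
        le_decayEnvelope (le_add_of_nonneg_right (norm_nonneg x)) fun k =>
          (hC k i x).trans (le_abs_self _)
    _ ≤ decayEnvelope (fun k => |C k|) ‖y‖ := antitone_decayEnvelope hnonneg hyx

end Envelope

section Gaussian

variable {V : Type*} [NormedAddCommGroup V] [InnerProductSpace ℝ V]

/-- The density of the standard Gaussian measure on a Euclidean space. -/
def stdGaussianDensity (z : V) : ℝ :=
  (2 * π) ^ (-(Module.finrank ℝ V : ℝ) / 2) * Real.exp (-(1 / 2) * ‖z‖ ^ 2)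

lemma one_add_pow_mul_exp_neg_half_sq_le (k : ℕ) {r : ℝ} (hr : 0 ≤ r) :
    (1 + r) ^ k * Real.exp (-(1 / 2) * r ^ 2) ≤ k.factorial * Real.exp (3 / 2) := by
  have hpow : (1 + r) ^ k ≤ k.factorial * Real.exp (1 + r) := by
    rw [mul_comm, ← div_le_iff₀ (by positivity)]
    exact Real.pow_div_factorial_le_exp (1 + r) (by positivity) k
  calc (1 + r) ^ k * Real.exp (-(1 / 2) * r ^ 2)
      ≤ k.factorial * Real.exp (1 + r) * Real.exp (-(1 / 2) * r ^ 2) := by gcongr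
    _ = k.factorial * Real.exp (1 + r + -(1 / 2) * r ^ 2) := by rw [mul_assoc, ← Real.exp_add]
    _ ≤ k.factorial * Real.exp (3 / 2) := by
        gcongr
        linarith [sq_nonneg (r - 1)]

variable [MeasurableSpace V] [BorelSpace V]

lemma rapidlyDecreasing_stdGaussianDensity :
    RapidlyDecreasing (stdGaussianDensity : V → ℝ) where
  stronglyMeasurable := by
    unfold stdGaussianDensity
    exact Measurable.stronglyMeasurable (by fun_prop)
  exists_bound k := by
    refine ⟨(2 * π) ^ (-(Module.finrank ℝ V : ℝ) / 2) * (k.factorial * Real.exp (3 / 2)),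
      fun z => ?_⟩
    rw [stdGaussianDensity, Real.norm_of_nonneg (by positivity), mul_left_comm]
    exact mul_le_mul_of_nonneg_left (one_add_pow_mul_exp_neg_half_sq_le k (norm_nonneg z))
      (by positivity)

variable [FiniteDimensional ℝ V]

lemma integral_stdGaussianDensity : ∫ z : V, stdGaussianDensity z = 1 := by
  simp only [stdGaussianDensity]
  rw [integral_const_mul, GaussianFourier.integral_rexp_neg_mul_sq_norm (by norm_num), neg_div,
    show π / (1 / 2) = 2 * π by ring, ← Real.rpow_add (by positivity), neg_add_cancel,
    Real.rpow_zero]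

lemma integral_gaussian_mul_eq_integral_stdGaussianDensity_mul {s : ℝ} (hs : 0 < s) (f : V → ℝ)
    (x : V) :
    ∫ y, (2 * π * s) ^ (-(Module.finrank ℝ V : ℝ) / 2) * Real.exp (-‖x - y‖ ^ 2 / (2 * s)) * f y =
      ∫ z, stdGaussianDensity z * f (x - √s • z) := by
  let G (v : V) : ℝ :=
    (2 * π * s) ^ (-(Module.finrank ℝ V : ℝ) / 2) * Real.exp (-‖v‖ ^ 2 / (2 * s)) * f (x - v)
  have hpow : √s ^ Module.finrank ℝ V * s ^ (-(Module.finrank ℝ V : ℝ) / 2) = 1 := by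
    rw [Real.sqrt_eq_rpow, ← Real.rpow_natCast, ← Real.rpow_mul hs.le, ← Real.rpow_add hs]
    convert Real.rpow_zero s using 2
    ring
  have hscale (z : V) : √s ^ Module.finrank ℝ V * G (√s • z) =
      stdGaussianDensity z * f (x - √s • z) := by
    have hexp : -‖√s • z‖ ^ 2 / (2 * s) = -(1 / 2) * ‖z‖ ^ 2 := by
      rw [norm_smul, mul_pow, Real.norm_of_nonneg (Real.sqrt_nonneg s), Real.sq_sqrt hs.le]
      field_simp
    simp only [G, stdGaussianDensity, hexp]
    rw [Real.mul_rpow (by positivity) hs.le]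
    linear_combination ((2 * π) ^ (-(Module.finrank ℝ V : ℝ) / 2) *
      Real.exp (-(1 / 2) * ‖z‖ ^ 2) * f (x - √s • z)) * hpow
  calc ∫ y, (2 * π * s) ^ (-(Module.finrank ℝ V : ℝ) / 2) *
        Real.exp (-‖x - y‖ ^ 2 / (2 * s)) * f y
      = ∫ y, G (x - y) := by simp only [G, sub_sub_cancel]
    _ = ∫ v, G v := integral_sub_left_eq_self G volume x
    _ = √s ^ Module.finrank ℝ V * ∫ z, G (√s • z) := by
        rw [Measure.integral_comp_smul_of_nonneg volume G √s (hR := Real.sqrt_nonneg s),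
          smul_eq_mul, mul_inv_cancel_left₀ (by positivity)]
    _ = ∫ z, stdGaussianDensity z * f (x - √s • z) := by
        rw [← integral_const_mul]
        simp only [hscale]

end Gaussian

section HeatSemigroup

variable {d : ℕ} {α : ℝ}

lemma heatP_eq_integral_stdGaussianDensity_mul (hα : 0 < α) {t : ℝ} (ht : 0 ≤ t) (f : Euc d → ℝ)
    (x : Euc d) :
    heatP d α t f x = ∫ z, stdGaussianDensity z * f (x - √(α * t) • z) := by
  rcases ht.eq_or_lt with rfl | ht
  · simp only [heatP, if_true, mul_zero, Real.sqrt_zero, zero_smul, sub_zero, integral_mul_const,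
      integral_stdGaussianDensity, one_mul]
  · rw [← integral_gaussian_mul_eq_integral_stdGaussianDensity_mul (mul_pos hα ht)]
    simp only [heatP, ht.ne', if_false, finrank_euclideanSpace_fin, mul_assoc]

lemma RapidlyDecreasing.exists_forall_heatP_bound (hα : 0 < α) {f : Euc d → ℝ}
    (hf : RapidlyDecreasing f) (T : ℝ) (k : ℕ) :
    ∃ C : ℝ, ∀ (t : Icc (0 : ℝ) T) x, (1 + ‖x‖) ^ k * ‖heatP d α t f x‖ ≤ C := by
  obtain ⟨A, hA⟩ := hf.exists_bound k
  let w (z : Euc d) : ℝ := (1 + √(α * T)) ^ k * ((1 + ‖z‖) ^ k * ‖stdGaussianDensity z‖)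
  have hw : Integrable w :=
    (rapidlyDecreasing_stdGaussianDensity.integrable_one_add_norm_pow_mul volume k).const_mul _
  refine ⟨A * ∫ z, w z, fun ⟨t, ht0, htT⟩ x => ?_⟩
  rw [heatP_eq_integral_stdGaussianDensity_mul hα ht0]
  refine one_add_norm_pow_mul_norm_integral_le hA hw (fun z => ?_) x
  have hdilate : 1 + ‖√(α * t) • z‖ ≤ (1 + √(α * T)) * (1 + ‖z‖) := by
    have hsqrt : √(α * t) ≤ √(α * T) := by gcongr
    rw [norm_smul, Real.norm_of_nonneg (Real.sqrt_nonneg _)]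
    nlinarith [norm_nonneg z, Real.sqrt_nonneg (α * T),
      mul_le_mul_of_nonneg_right hsqrt (norm_nonneg z)]
  calc (1 + ‖√(α * t) • z‖) ^ k * ‖stdGaussianDensity z‖
      ≤ ((1 + √(α * T)) * (1 + ‖z‖)) ^ k * ‖stdGaussianDensity z‖ := by gcongr
    _ = w z := by rw [mul_pow, mul_assoc]

theorem RapidlyDecreasing.exists_schwartzMap_abs_heatP_le (hα : 0 < α) {f : Euc d → ℝ}
    (hf : RapidlyDecreasing f) (T : ℝ) :
    ∃ Φ : SchwartzMap (Euc d) ℝ, ∀ t ∈ Icc (0 : ℝ) T, ∀ x, |heatP d α t f x| ≤ Φ x := by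
  obtain ⟨Φ, hΦ⟩ := exists_schwartzMap_forall_norm_le (hf.exists_forall_heatP_bound hα T)
  exact ⟨Φ, fun t ht x => hΦ ⟨t, ht⟩ x⟩

theorem statement4_general (hα : 0 < α) {μ : Measure (Euc d)} (hμ : IsTempered μ) {f : Euc d → ℝ}
    (hf : RapidlyDecreasing f) (T : ℝ) :
    (⨆ t ∈ Icc (0 : ℝ) T, ∫⁻ x, ENNReal.ofReal |heatP d α t f x| ∂μ) < ⊤ := by
  obtain ⟨Φ, hΦ⟩ := hf.exists_schwartzMap_abs_heatP_le hα T
  calc (⨆ t ∈ Icc (0 : ℝ) T, ∫⁻ x, ENNReal.ofReal |heatP d α t f x| ∂μ)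
      ≤ ∫⁻ x, ENNReal.ofReal (Φ x) ∂μ :=
        iSup₂_le fun t ht => lintegral_mono fun x => ENNReal.ofReal_le_ofReal (hΦ t ht x)
    _ < ⊤ := (hμ.2 Φ).lintegral_lt_top

end HeatSemigroup

/-- for a tempered measure `μ`, a Schwartz function `ψ` and `T > 0`,
`sup_{t ∈ [0,T]} ∫ |P_t ψ| dμ < ∞`. -/
theorem statement4 (d : ℕ) (hd : 1 ≤ d) (α : ℝ) (hα : 0 < α)
    (μ : Measure (Euc d)) (hμ : IsTempered μ)
    (ψ : SchwartzMap (Euc d) ℝ) (T : ℝ) (hT : 0 < T) :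
    (⨆ t ∈ Set.Icc (0 : ℝ) T,
      ∫⁻ x, ENNReal.ofReal |heatP d α t (fun y => ψ y) x| ∂μ) < ⊤ :=
  statement4_general hα hμ (rapidlyDecreasing_schwartzMap ψ) T
end
end
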